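/- arXiv:2508.07097 — 2 statements merged into one kernel-verified Lean document; each statement's English description precedes it below -/
import Mathlib

section
/- Let φ: (R,m,k) → (S,n,ℓ) be a local ring homomorphism between commutative Noetherian local rings which is essentially of finite type and complete intersection at n, let M be a finitely generated S-module, and assume ℓ is separable over k. If CI*-fd_R M < ∞, then CI*-dim_S M < ∞. -/
/-!
Common definitions: André–Quillen homology via the standard (comonad/polynomial)
simplicial resolution, complete-intersection (flat) dimensions via quasi-deformations,
Cohen factorizations, Koszul homology `H₁`, and related notions.
-/

universe u

open TensorProduct IsLocalRing

noncomputable section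

/-! ### Flat and projective dimension -/

/-- `FlatDimLE Q n N` : the `Q`-module `N` has flat dimension at most `n`,
i.e. it admits a flat resolution of length at most `n`. -/
def FlatDimLE (Q : Type u) [CommRing Q] : ℕ → (N : Type u) → [AddCommGroup N] → [Module Q N] → Prop
  | 0, N, _, _ => Module.Flat Q N
  | n+1, N, _, _ =>
      ∃ (F : Type u) (_ : AddCommGroup F) (_ : Module Q F) (f : F →ₗ[Q] N),
        Module.Flat Q F ∧ Function.Surjective f ∧ FlatDimLE Q n (LinearMap.ker f)

/-- `ProjDimLE Q n N` : the `Q`-module `N` has projective dimension at most `n`. -/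
def ProjDimLE (Q : Type u) [CommRing Q] : ℕ → (N : Type u) → [AddCommGroup N] → [Module Q N] → Prop
  | 0, N, _, _ => Module.Projective Q N
  | n+1, N, _, _ =>
      ∃ (F : Type u) (_ : AddCommGroup F) (_ : Module Q F) (f : F →ₗ[Q] N),
        Module.Projective Q F ∧ Function.Surjective f ∧ ProjDimLE Q n (LinearMap.ker f)

/-- The flat dimension `fd_Q N` is finite. -/
def FlatDimFinite (Q : Type u) [CommRing Q] (N : Type u) [AddCommGroup N] [Module Q N] : Prop :=
  ∃ n : ℕ, FlatDimLE Q n N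

/-- The projective dimension `pd_Q N` is finite. -/
def ProjDimFinite (Q : Type u) [CommRing Q] (N : Type u) [AddCommGroup N] [Module Q N] : Prop :=
  ∃ n : ℕ, ProjDimLE Q n N

/-! ### Regular sequences, regular local rings, complete intersection conditions -/

/-- The ideal `I` is generated by an `A`-regular sequence. -/
def GeneratedByRegularSequence (A : Type u) [CommRing A] (I : Ideal A) : Prop :=
  ∃ rs : List A, RingTheory.Sequence.IsRegular A rs ∧ Ideal.span {x | x ∈ rs} = I

/-- A (Noetherian local) ring is regular iff its maximal ideal is generated by a
regular sequence. -/
def IsRegularLocal (A : Type u) [CommRing A] : Prop :=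
  IsNoetherianRing A ∧
    ∃ h : IsLocalRing A, GeneratedByRegularSequence A (@IsLocalRing.maximalIdeal A _ h)

/-- A local homomorphism is weakly regular if it is flat with regular closed fibre. -/
def IsWeaklyRegularHom (A B : Type u) [CommRing A] [CommRing B] [IsLocalRing A]
    (f : A →+* B) : Prop :=
  IsLocalHom f ∧ (letI := f.toAlgebra; Module.Flat A B) ∧
    IsRegularLocal (B ⧸ Ideal.map f (maximalIdeal A))

/-- `R'' → f → g` is a Cohen factorization of the semi-completion of `ψ : A → B`
with respect to the (maximal) ideal `J` of `B`:  `A → R'' → B̂` with `A → R''`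
weakly regular, `R''` complete Noetherian local and `R'' → B̂` surjective local. -/
def IsCohenFactorizationAt (A B : Type u) [CommRing A] [CommRing B] [IsLocalRing A]
    (ψ : A →+* B) (J : Ideal B) (R'' : Type u) [CommRing R'']
    (f : A →+* R'') (g : R'' →+* AdicCompletion J B) : Prop :=
  g.comp f = (algebraMap B (AdicCompletion J B)).comp ψ ∧
  IsNoetherianRing R'' ∧
  (∃ h : IsLocalRing R'', IsAdicComplete (@IsLocalRing.maximalIdeal R'' _ h) R'') ∧
  IsWeaklyRegularHom A R'' f ∧
  Function.Surjective g ∧ IsLocalHom g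

/-- `ψ : A → B` is complete intersection (c.i.) at the ideal `J` (typically the
maximal ideal of `B`): in a Cohen factorization `A → R'' → B̂` of the
semi-completion of `ψ`, the kernel of `R'' → B̂` is generated by a regular sequence. -/
def IsCIAt (A B : Type u) [CommRing A] [CommRing B] [IsLocalRing A]
    (ψ : A →+* B) (J : Ideal B) : Prop :=
  ∃ (R'' : Type u) (_ : CommRing R'') (f : A →+* R'') (g : R'' →+* AdicCompletion J B),
    IsCohenFactorizationAt A B ψ J R'' f g ∧ GeneratedByRegularSequence R'' (RingHom.ker g)

/-- A Noetherian local ring is a complete intersection if its completion is the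
quotient of a complete regular local ring by an ideal generated by a regular sequence. -/
def IsCompleteIntersectionRing (A : Type u) [CommRing A] : Prop :=
  IsNoetherianRing A ∧
  ∃ h : IsLocalRing A,
    ∃ (Q : Type u) (_ : CommRing Q)
      (g : Q →+* AdicCompletion (@IsLocalRing.maximalIdeal A _ h) A),
      IsRegularLocal Q ∧ (∃ hq : IsLocalRing Q, IsAdicComplete (@IsLocalRing.maximalIdeal Q _ hq) Q) ∧
      Function.Surjective g ∧ GeneratedByRegularSequence Q (RingHom.ker g)

/-! ### Complete intersection (flat) dimensions via quasi-deformations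

`R → R' ← Q` is a quasi-deformation when `R → R'` is flat local and `Q → R'` is
surjective local with kernel generated by a `Q`-regular sequence (all rings
Noetherian local).  The various complete intersection (flat) dimensions
`CI-fd`, `CI-dim`, `CI*-fd`, `CI*-dim`, `cidim-fd`, `cidim` of a module `M` are
`inf { fd_Q(R' ⊗_R M) - pd_Q R' }` over (upper / complete intersection)
quasi-deformations; such a dimension is finite iff there is a quasi-deformation
of the appropriate kind for which both `fd_Q (R' ⊗_R M)` and `pd_Q R'` are finite. -/

/-- The conditions on `R → R' ← Q` making it a quasi-deformation. -/
def IsQuasiDeformation (R R' Q : Type u) [CommRing R] [CommRing R'] [CommRing Q]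
    (f : R →+* R') (g : Q →+* R') : Prop :=
  IsLocalRing R' ∧ IsLocalRing Q ∧ IsNoetherianRing R' ∧ IsNoetherianRing Q ∧
  IsLocalHom f ∧ IsLocalHom g ∧ (letI := f.toAlgebra; Module.Flat R R') ∧
  Function.Surjective g ∧ GeneratedByRegularSequence Q (RingHom.ker g)

/-- `CI-fd_R M < ∞` (equivalently, for finitely generated `M`, `CI-dim_R M < ∞`):
there is a quasi-deformation `R → R' ← Q` with `fd_Q (R' ⊗_R M)` and `pd_Q R'` finite. -/
def HasFiniteCIDim (R : Type u) [CommRing R] (M : Type u) [AddCommGroup M] [Module R M] : Prop :=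
  ∃ (R' Q : Type u) (_ : CommRing R') (_ : CommRing Q) (f : R →+* R') (g : Q →+* R'),
    IsQuasiDeformation R R' Q f g ∧
    (letI := f.toAlgebra;
     letI := g.toAlgebra;
     letI : Module Q (R' ⊗[R] M) := Module.compHom _ g;
     FlatDimFinite Q (R' ⊗[R] M) ∧ ProjDimFinite Q R')

/-- `CI*-fd_R M < ∞` (resp. `CI*-dim_R M < ∞`): as in `HasFiniteCIDim` but over
upper quasi-deformations, i.e. `R → R'` is weakly regular. -/
def HasFiniteUpperCIDim (R : Type u) [CommRing R] [IsLocalRing R]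
    (M : Type u) [AddCommGroup M] [Module R M] : Prop :=
  ∃ (R' Q : Type u) (_ : CommRing R') (_ : CommRing Q) (f : R →+* R') (g : Q →+* R'),
    IsQuasiDeformation R R' Q f g ∧ IsWeaklyRegularHom R R' f ∧
    (letI := f.toAlgebra;
     letI := g.toAlgebra;
     letI : Module Q (R' ⊗[R] M) := Module.compHom _ g;
     FlatDimFinite Q (R' ⊗[R] M) ∧ ProjDimFinite Q R')

/-- `cidim-fd_R M < ∞` (resp. `cidim_R M < ∞`): as in `HasFiniteCIDim` but over
complete intersection quasi-deformations, i.e. `R → R'` is c.i. at the maximal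
ideal of `R'`. -/
def HasFiniteCIQDDim (R : Type u) [CommRing R] [IsLocalRing R]
    (M : Type u) [AddCommGroup M] [Module R M] : Prop :=
  ∃ (R' Q : Type u) (_ : CommRing R') (_ : CommRing Q) (hR' : IsLocalRing R')
    (f : R →+* R') (g : Q →+* R'),
    IsQuasiDeformation R R' Q f g ∧
    IsCIAt R R' f (@IsLocalRing.maximalIdeal R' _ hR') ∧
    (letI := f.toAlgebra;
     letI := g.toAlgebra;
     letI : Module Q (R' ⊗[R] M) := Module.compHom _ g;
     FlatDimFinite Q (R' ⊗[R] M) ∧ ProjDimFinite Q R')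

/-! ### André–Quillen homology

`D_n(S|R, M)` is defined as the `n`-th homology of `L ⊗_S M`, where `L` is the
cotangent complex of the `R`-algebra `S`: the complex associated to the standard
simplicial resolution `X` of `S` by polynomial `R`-algebras (the comonad
resolution `X_n = G^{n+1} S`, `G A = R[A]`), with `L_n = S ⊗_{X_n} Ω_{X_n/R}`
the free `S`-module on the variables of `X_n` and differentials the alternating
sums of the maps induced by the face maps. -/

/-- `AQV R S n` is, for `n ≥ 1`, the `n`-th ring in the standard simplicial
polynomial resolution of `S` over `R` (and `AQV R S 0 = S` as an index set). -/
def AQV (R S : Type u) [CommRing R] : ℕ → Type u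
  | 0 => S
  | n+1 => MvPolynomial (AQV R S n) R

noncomputable instance (R S : Type u) [CommRing R] (n : ℕ) : CommRing (AQV R S (n+1)) :=
  inferInstanceAs (CommRing (MvPolynomial (AQV R S n) R))

noncomputable instance (R S : Type u) [CommRing R] (n : ℕ) : Algebra R (AQV R S (n+1)) :=
  inferInstanceAs (Algebra R (MvPolynomial (AQV R S n) R))

/-- The augmentations `X_n → S` of the standard resolution. -/
def AQaug (R S : Type u) [CommRing R] [CommRing S] [Algebra R S] :
    (n : ℕ) → (AQV R S (n+1) →ₐ[R] S)
  | 0 => MvPolynomial.aeval (id : S → S)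
  | n+1 => MvPolynomial.aeval (fun v : AQV R S (n+1) => AQaug R S n v)

/-- The face maps `dᵢ : X_{n+1} → X_n` of the standard resolution: `d₀` is the
counit and `d_{i+1} = G(dᵢ)`. -/
def AQface (R S : Type u) [CommRing R] [CommRing S] [Algebra R S] :
    (n : ℕ) → (i : ℕ) → (AQV R S (n+2) →ₐ[R] AQV R S (n+1))
  | n, 0 => MvPolynomial.aeval (id : AQV R S (n+1) → AQV R S (n+1))
  | 0, _+1 => MvPolynomial.rename ⇑(AQaug R S 0)
  | n+1, i+1 => MvPolynomial.rename ⇑(AQface R S n i)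

variable (R S : Type u) [CommRing R] [CommRing S] [Algebra R S]
variable (M : Type u) [AddCommGroup M] [Module S M]

/-- The map `L_{n+1} ⊗ M → L_n ⊗ M` induced by an `R`-algebra map
`f : X_{n+1} → X_n` on the (base-changed) Kähler differentials: the free module
on the variables `v` of `X_{n+1}` maps by `e_v ↦ ∑_w aug(∂(f Xᵥ)/∂w) • e_w`. -/
def AQind (n : ℕ) (f : AQV R S (n+2) →ₐ[R] AQV R S (n+1)) :
    (AQV R S (n+1) →₀ M) →ₗ[S] (AQV R S n →₀ M) :=
  Finsupp.lsum S fun v : AQV R S (n+1) =>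
    letI : DecidableEq (AQV R S n) := Classical.decEq _
    let P : MvPolynomial (AQV R S n) R := f (MvPolynomial.X v)
    ∑ w ∈ P.vars,
      (Finsupp.lsingle w).comp
        ((AQaug R S n ((MvPolynomial.pderiv w) P) : S) • (LinearMap.id : M →ₗ[S] M))

/-- The differential `L_{n+1} ⊗ M → L_n ⊗ M` of the cotangent complex:
the alternating sum of the maps induced by the face maps. -/
def AQdiff (n : ℕ) : (AQV R S (n+1) →₀ M) →ₗ[S] (AQV R S n →₀ M) :=
  ∑ i ∈ Finset.range (n+2), ((-1 : ℤ)^i) • AQind R S M n (AQface R S n i)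

/-- Cycles of the cotangent complex with coefficients in `M`. -/
def AQcycles : (n : ℕ) → Submodule S (AQV R S n →₀ M)
  | 0 => ⊤
  | n+1 => LinearMap.ker (AQdiff R S M n)

/-- André–Quillen homology `D_n(S|R, M)`. -/
def AQH (n : ℕ) : Type u :=
  AQcycles R S M n ⧸
    (LinearMap.range (AQdiff R S M n)).comap (AQcycles R S M n).subtype

noncomputable instance (n : ℕ) : AddCommGroup (AQH R S M n) :=
  inferInstanceAs (AddCommGroup (AQcycles R S M n ⧸
    (LinearMap.range (AQdiff R S M n)).comap (AQcycles R S M n).subtype))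

/-- `AQdimLE R S d`: the André–Quillen dimension of the `R`-algebra `S` is at
most `d`, i.e. `D_n(S|R, -) = 0` for all `n > d`. -/
def AQdimLE (d : ℕ) : Prop :=
  ∀ n : ℕ, d < n → ∀ (N : Type u) (iN : AddCommGroup N) (mN : Module S N),
    Subsingleton (@AQH R S _ _ _ N iN mN n)

/-- `AQ-dim_R S < ∞`. -/
def AQdimFinite : Prop := ∃ d : ℕ, AQdimLE R S d

/-! ### Koszul homology `H₁` -/

/-- First differential of the Koszul complex on `x : Fin c → A`. -/
def koszulD1 (A : Type u) [CommRing A] {c : ℕ} (x : Fin c → A) : (Fin c → A) →ₗ[A] A :=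
  ∑ i, x i • (LinearMap.proj i : ((Fin c → A)) →ₗ[A] A)

/-- One-cycles of the Koszul complex on `x`. -/
def koszulZ1 (A : Type u) [CommRing A] {c : ℕ} (x : Fin c → A) : Submodule A (Fin c → A) :=
  LinearMap.ker (koszulD1 A x)

/-- One-boundaries of the Koszul complex on `x` (the image of the second Koszul
differential, spanned by the elements `xᵢ eⱼ - xⱼ eᵢ`). -/
def koszulB1 (A : Type u) [CommRing A] {c : ℕ} (x : Fin c → A) : Submodule A (Fin c → A) :=
  Submodule.span A
    {v : Fin c → A | ∃ i j, v =
      x i • (Pi.single j (1 : A) : Fin c → A) - x j • (Pi.single i (1 : A) : Fin c → A)}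

/-- First Koszul homology of the sequence `x : Fin c → A`. -/
def KoszulH1 (A : Type u) [CommRing A] {c : ℕ} (x : Fin c → A) : Type u :=
  koszulZ1 A x ⧸ (koszulB1 A x).comap (koszulZ1 A x).subtype

noncomputable instance (A : Type u) [CommRing A] {c : ℕ} (x : Fin c → A) :
    AddCommGroup (KoszulH1 A x) :=
  inferInstanceAs (AddCommGroup (koszulZ1 A x ⧸ (koszulB1 A x).comap (koszulZ1 A x).subtype))

noncomputable instance (A : Type u) [CommRing A] {c : ℕ} (x : Fin c → A) :
    Module A (KoszulH1 A x) :=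
  inferInstanceAs (Module A (koszulZ1 A x ⧸ (koszulB1 A x).comap (koszulZ1 A x).subtype))

/-- `H₁(K(σ))` is a free `T̂`-module:  for any Cohen factorization
`S → S'' → T̂` of the semi-completion of `σ` and any finite generating set `x` of
`ker (S'' → T̂)`, the first Koszul homology of `x`, base-changed to `T̂`
(it is killed by `ker (S'' → T̂)`), is a free `T̂`-module. -/
def KoszulH1FreeHom (S T : Type u) [CommRing S] [CommRing T] [IsLocalRing S] [IsLocalRing T]
    (σ : S →+* T) : Prop :=
  ∀ (S'' : Type u) (_ : CommRing S'') (f : S →+* S'')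
    (g : S'' →+* AdicCompletion (maximalIdeal T) T),
    IsCohenFactorizationAt S T σ (maximalIdeal T) S'' f g →
    ∀ (c : ℕ) (x : Fin c → S''), Ideal.span (Set.range x) = RingHom.ker g →
      (letI := g.toAlgebra;
       Module.Free (AdicCompletion (maximalIdeal T) T)
         ((AdicCompletion (maximalIdeal T) T) ⊗[S''] (KoszulH1 S'' x)))

/-! ### Separability (MacLane) -/

/-- A field extension `ℓ/k` is separable (in the sense of MacLane, allowing
non-algebraic extensions) iff `K ⊗_k ℓ` is reduced for every field extension `K/k`. -/
def IsSeparableFieldExtension (k ℓ : Type u) [Field k] [Field ℓ] [Algebra k ℓ] : Prop :=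
  ∀ (K : Type u) (_ : Field K) (_ : Algebra k K), IsReduced (K ⊗[k] ℓ)

end

/-!
Present `S` as a quotient of a localization `P` of `R[X]`.

If `R → R'' → Ŝ` is a Cohen factorization, let `T` and `D` be the corresponding localizations of
`R''[X]` and `R'' ⊗_R S`, so that `T → D → Ŝ` are surjective. The kernel of `T → Ŝ` is generated
by a regular sequence because that of `R'' → Ŝ` is. The kernel of `D → Ŝ` is too: modulo the
maximal ideal of `S` it is the maximal ideal of the localization of `(R'' / m R'') ⊗_k ℓ` at the
graph of the residue map `R'' / m R'' → ℓ`, which is a regular ring because `ℓ` is separable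
over `k`. Hence the kernel of `T → D`, which is the extension of the kernel of `P → S` along a
faithfully flat homomorphism, is generated by a regular sequence, and so is the kernel of `P → S`.

Now let `R → R' ← Q` be an upper quasi-deformation and let `𝔭` be a minimal prime over the
extension of the maximal ideal of `B = R' / m R'` to `B ⊗_k ℓ`. By separability that extension is
radical, so `B ⊗_k ℓ` is regular at `𝔭`. Therefore the localization `S'` of `R' ⊗_R S` at `𝔭` is
weakly regular over `S`, and a localization of `Q[X]` maps onto `S'` with kernel generated by a
regular sequence. Finiteness of the flat dimension of `R' ⊗_R M` over `Q` passes to that of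
`S' ⊗_S M` over the localization of `Q[X]`.
-/

/-! ### Flat and projective dimension under change of rings -/

section FlatDimension

open CategoryTheory

variable {Q : Type u} [CommRing Q]

section CharacterModule

variable {A B C : Type u} [AddCommGroup A] [Module Q A] [AddCommGroup B] [Module Q B]
  [AddCommGroup C] [Module Q C] {f : A →ₗ[Q] B} {g : B →ₗ[Q] C}

/-- The complex `C⋆ → B⋆ → A⋆` of character modules dual to a complex `A → B → C`. -/
noncomputable abbrev characterModuleComplex (hfg : g.comp f = 0) : ShortComplex (ModuleCat.{u} Q) :=
  ModuleCat.shortComplexOfCompEqZero (CharacterModule.dual g) (CharacterModule.dual f) <| by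
    rw [← CharacterModule.dual_comp, hfg, CharacterModule.dual_zero]

theorem characterModuleComplex_shortExact (hf : Function.Injective f)
    (hg : Function.Surjective g) (hfg : Function.Exact f g) :
    (characterModuleComplex hfg.linearMap_comp_eq_zero).ShortExact := by
  refine ModuleCat.shortComplex_shortExact _ (fun φ ↦ ⟨fun hφ ↦ ?_, ?_⟩)
    (CharacterModule.dual_injective_of_surjective g hg)
    (CharacterModule.dual_surjective_of_injective f hf)
  · have hker : g.toAddMonoidHom.ker ≤ AddMonoidHom.ker (φ : B →+ _) := by
      intro b hb
      obtain ⟨a, rfl⟩ := (hfg b).1 hb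
      exact DFunLike.congr_fun hφ a
    refine ⟨AddMonoidHom.liftOfSurjective g.toAddMonoidHom hg ⟨φ, hker⟩, ?_⟩
    ext b
    exact AddMonoidHom.liftOfRightInverse_comp_apply _ _
      (Function.rightInverse_surjInv hg) ⟨(φ : B →+ _), hker⟩ b
  · rintro ⟨ψ, rfl⟩
    ext a
    change ψ (g (f a)) = 0
    rw [hfg.apply_apply_eq_zero, map_zero]

end CharacterModule

theorem flat_iff_hasInjectiveDimensionLT_characterModule (N : Type u) [AddCommGroup N]
    [Module Q N] :
    Module.Flat Q N ↔ HasInjectiveDimensionLT (ModuleCat.of Q (CharacterModule N)) 1 := by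
  rw [Module.Flat.iff_characterModule_injective, Module.injective_iff_injective_object,
    injective_iff_hasInjectiveDimensionLT_one]

theorem flatDimLE_iff_hasInjectiveDimensionLT (n : ℕ) (N : Type u) [AddCommGroup N]
    [Module Q N] :
    FlatDimLE Q n N ↔
      HasInjectiveDimensionLT (ModuleCat.of Q (CharacterModule N)) (n + 1) := by
  induction n generalizing N with
  | zero => exact flat_iff_hasInjectiveDimensionLT_characterModule N
  | succ n ih =>
    have dimension_shift (F : Type u) [AddCommGroup F] [Module Q F] (f : F →ₗ[Q] N)
        (hF : Module.Flat Q F) (hf : Function.Surjective f) :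
        FlatDimLE Q n (LinearMap.ker f) ↔
          HasInjectiveDimensionLT (ModuleCat.of Q (CharacterModule N)) (n + 1 + 1) := by
      rw [flat_iff_hasInjectiveDimensionLT_characterModule,
        ← injective_iff_hasInjectiveDimensionLT_one] at hF
      rw [ih]
      exact (characterModuleComplex_shortExact (LinearMap.ker f).injective_subtype hf
        f.exact_subtype_ker_map).hasInjectiveDimensionLT_X₃_iff n hF
    constructor
    · rintro ⟨F, _, _, f, hF, hf, hker⟩
      exact (dimension_shift F f hF hf).1 hker
    · intro h
      have hsurj := Finsupp.linearCombination_id_surjective Q N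
      exact ⟨N →₀ Q, inferInstance, inferInstance, _, inferInstance, hsurj,
        (dimension_shift _ _ inferInstance hsurj).2 h⟩

theorem FlatDimLE.of_linearEquiv {n : ℕ} {N N' : Type u} [AddCommGroup N] [Module Q N]
    [AddCommGroup N'] [Module Q N'] (e : N ≃ₗ[Q] N') (h : FlatDimLE Q n N) :
    FlatDimLE Q n N' := by
  rw [flatDimLE_iff_hasInjectiveDimensionLT] at h ⊢
  exact hasInjectiveDimensionLT_of_iso (CharacterModule.congr e).toModuleIso (n + 1)

theorem FlatDimLE.succ_of_exact {n : ℕ} {A B C : Type u} [AddCommGroup A] [Module Q A]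
    [AddCommGroup B] [Module Q B] [AddCommGroup C] [Module Q C] {f : A →ₗ[Q] B} {g : B →ₗ[Q] C}
    (hf : Function.Injective f) (hg : Function.Surjective g) (hfg : Function.Exact f g)
    (hA : FlatDimLE Q n A) (hB : FlatDimLE Q n B) : FlatDimLE Q (n + 1) C := by
  rw [flatDimLE_iff_hasInjectiveDimensionLT] at hA hB ⊢
  exact (characterModuleComplex_shortExact hf hg hfg).hasInjectiveDimensionLT_X₁ (n + 1) hA
    (hasInjectiveDimensionLT_of_ge _ (n + 1) _ (by lia))

section BaseChange

variable {Q' : Type u} [CommRing Q'] [Algebra Q Q'] [Module.Flat Q Q'] {n : ℕ} {N : Type u}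
  [AddCommGroup N] [Module Q N]

theorem FlatDimLE.baseChange (h : FlatDimLE Q n N) : FlatDimLE Q' n (Q' ⊗[Q] N) := by
  induction n generalizing N with
  | zero =>
    have : Module.Flat Q N := h
    exact (inferInstance : Module.Flat Q' (Q' ⊗[Q] N))
  | succ n ih =>
    obtain ⟨F, _, _, f, hF, hf, hker⟩ := h
    exact ⟨Q' ⊗[Q] F, inferInstance, inferInstance, f.baseChange Q', inferInstance,
      LinearMap.lTensor_surjective Q' hf,
      (ih hker).of_linearEquiv (LinearMap.tensorKerEquiv Q' Q' f)⟩

theorem FlatDimLE.of_flat_epi [Algebra.IsEpi Q Q'] [Module Q' N] [IsScalarTower Q Q' N]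
    (h : FlatDimLE Q n N) : FlatDimLE Q' n N :=
  h.baseChange.of_linearEquiv (TensorProduct.lid' Q Q' N)

end BaseChange

end FlatDimension

section FlatDimensionPolynomial

open Polynomial

theorem polynomial_tensor_hom_ext {A N P : Type*} [CommRing A] [AddCommGroup N] [Module A N]
    [AddCommGroup P] [Module A P] {f g : A[X] ⊗[A] N →ₗ[A] P}
    (h : ∀ i m, f ((X ^ i : A[X]) ⊗ₜ m) = g ((X ^ i : A[X]) ⊗ₜ m)) : f = g := by
  refine TensorProduct.ext ((Polynomial.basisMonomials A).ext fun i ↦ ?_)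
  ext m
  simpa [Polynomial.monomial_one_right_eq_X_pow] using h i m

section CharacteristicSequence

variable (A N : Type*) [CommRing A] [AddCommGroup N] [Module A N] [Module A[X] N]
  [IsScalarTower A A[X] N]

/-- Multiplication by the variable on an `A[X]`-module, as an `A`-linear map. -/
noncomputable def mulX : N →ₗ[A] N := (LinearMap.lsmul A[X] N X).restrictScalars A

/-- The injection `X ⊗ 1 - 1 ⊗ X` of the characteristic sequence
`0 → A[X] ⊗ N → A[X] ⊗ N → N → 0` of an `A[X]`-module `N`. -/
noncomputable def characteristicMap : A[X] ⊗[A] N →ₗ[A[X]] A[X] ⊗[A] N :=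
  (X : A[X]) • LinearMap.id - (mulX A N).baseChange A[X]

/-- The surjection `p ⊗ m ↦ p • m` of the characteristic sequence of an `A[X]`-module. -/
noncomputable def characteristicAction : A[X] ⊗[A] N →ₗ[A[X]] N :=
  (LinearMap.id : N →ₗ[A] N).liftBaseChange A[X]

/-- The map `m ↦ ∑_{j < i} X ^ j ⊗ X ^ (i - 1 - j) • m`, that is, the quotient of
`X ^ i ⊗ m - 1 ⊗ X ^ i • m` by `X ⊗ 1 - 1 ⊗ X`. -/
noncomputable def dividedDifference : ℕ → (N →ₗ[A] A[X] ⊗[A] N)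
  | 0 => 0
  | i + 1 => TensorProduct.mk A A[X] N (X ^ i) + (dividedDifference i).comp (mulX A N)

/-- The `A`-linear contraction of the characteristic sequence, sending `X ^ i ⊗ m` to its divided
difference. -/
noncomputable def characteristicContraction : A[X] ⊗[A] N →ₗ[A] A[X] ⊗[A] N :=
  TensorProduct.lift ((Polynomial.basisMonomials A).constr A (dividedDifference A N))

variable {A N}

theorem characteristicMap_tmul (p : A[X]) (m : N) :
    characteristicMap A N (p ⊗ₜ m) = (X * p) ⊗ₜ m - p ⊗ₜ ((X : A[X]) • m) := by
  simp [characteristicMap, mulX, TensorProduct.smul_tmul']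

theorem characteristicAction_tmul (p : A[X]) (m : N) :
    characteristicAction A N (p ⊗ₜ m) = p • m := by
  simp [characteristicAction]

theorem characteristicContraction_X_pow_tmul (i : ℕ) (m : N) :
    characteristicContraction A N ((X ^ i : A[X]) ⊗ₜ m) = dividedDifference A N i m := by
  have : (X ^ i : A[X]) = Polynomial.basisMonomials A i := by
    simp [Polynomial.monomial_one_right_eq_X_pow]
  simp only [this, characteristicContraction, TensorProduct.lift.tmul, Module.Basis.constr_basis]

theorem characteristicContraction_characteristicMap (z : A[X] ⊗[A] N) :
    characteristicContraction A N (characteristicMap A N z) = z := by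
  refine LinearMap.congr_fun (f := characteristicContraction A N ∘ₗ
    (characteristicMap A N).restrictScalars A) (g := LinearMap.id)
    (polynomial_tensor_hom_ext fun i m ↦ ?_) z
  simp only [LinearMap.comp_apply, LinearMap.restrictScalars_apply, characteristicMap_tmul,
    map_sub, ← pow_succ', characteristicContraction_X_pow_tmul, dividedDifference]
  simp [mulX]

theorem characteristicMap_dividedDifference (i : ℕ) (m : N) :
    characteristicMap A N (dividedDifference A N i m) =
      (X ^ i : A[X]) ⊗ₜ m - 1 ⊗ₜ ((X ^ i : A[X]) • m) := by
  induction i generalizing m with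
  | zero => simp [dividedDifference]
  | succ i ih =>
    have := ih ((X : A[X]) • m)
    simp only [dividedDifference, mulX, LinearMap.add_apply, LinearMap.comp_apply,
      TensorProduct.mk_apply, LinearMap.restrictScalars_apply, LinearMap.lsmul_apply, map_add,
      characteristicMap_tmul, this, ← mul_smul, ← pow_succ, ← pow_succ']
    abel

theorem characteristicMap_characteristicContraction (z : A[X] ⊗[A] N) :
    characteristicMap A N (characteristicContraction A N z) =
      z - 1 ⊗ₜ characteristicAction A N z := by
  refine LinearMap.congr_fun (f := (characteristicMap A N).restrictScalars A ∘ₗ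
    characteristicContraction A N) (g := LinearMap.id -
      TensorProduct.mk A A[X] N 1 ∘ₗ (characteristicAction A N).restrictScalars A)
    (polynomial_tensor_hom_ext fun i m ↦ ?_) z
  simp [characteristicContraction_X_pow_tmul, characteristicMap_dividedDifference,
    characteristicAction_tmul]

theorem exact_characteristicMap_characteristicAction :
    Function.Exact (characteristicMap A N) (characteristicAction A N) := by
  intro z
  constructor
  · intro hz
    refine ⟨characteristicContraction A N z, ?_⟩
    rw [characteristicMap_characteristicContraction, hz, tmul_zero, sub_zero]
  · rintro ⟨z, rfl⟩
    induction z with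
    | zero => simp
    | add a b ha hb => simp [ha, hb]
    | tmul p m =>
      rw [characteristicMap_tmul, map_sub, characteristicAction_tmul, characteristicAction_tmul,
        ← mul_smul, mul_comm, sub_self]

end CharacteristicSequence

theorem FlatDimLE.polynomial {A N : Type u} [CommRing A] [AddCommGroup N] [Module A N]
    [Module A[X] N] [IsScalarTower A A[X] N] {n : ℕ} (h : FlatDimLE A n N) :
    FlatDimLE A[X] (n + 1) N :=
  .succ_of_exact (Function.LeftInverse.injective characteristicContraction_characteristicMap)
    (fun m ↦ ⟨1 ⊗ₜ m, by rw [characteristicAction_tmul, one_smul]⟩)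
    exact_characteristicMap_characteristicAction h.baseChange h.baseChange

theorem FlatDimLE.of_ringEquiv {B B' N : Type u} [CommRing B] [CommRing B'] [AddCommGroup N]
    [Module B N] [Module B' N] (e : B ≃+* B') (he : ∀ (b : B) (x : N), e b • x = b • x) {n : ℕ}
    (h : FlatDimLE B n N) : FlatDimLE B' n N := by
  let _ : Algebra B B' := e.toRingHom.toAlgebra
  have : IsScalarTower B B' N := .of_algebraMap_smul he
  have : Algebra.IsEpi B B' := Algebra.isEpi_of_surjective_algebraMap B B' e.surjective
  have : Module.Flat B B' := RingHom.Flat.of_bijective e.bijective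
  exact h.of_flat_epi

theorem FlatDimFinite.mvPolynomial {n : ℕ} {A N : Type u} [CommRing A] [AddCommGroup N]
    [Module A N] [Module (MvPolynomial (Fin n) A) N] [IsScalarTower A (MvPolynomial (Fin n) A) N]
    (h : FlatDimFinite A N) : FlatDimFinite (MvPolynomial (Fin n) A) N := by
  induction n generalizing ‹Module (MvPolynomial (Fin n) A) N› with
  | zero =>
    obtain ⟨d, hd⟩ := h
    exact ⟨d, hd.of_ringEquiv (MvPolynomial.isEmptyAlgEquiv A (Fin 0)).symm.toRingEquiv
      (algebraMap_smul (MvPolynomial (Fin 0) A))⟩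
  | succ n ih =>
    let e := MvPolynomial.finSuccEquiv A n
    let _ : Module (MvPolynomial (Fin n) A)[X] N :=
      Module.compHom N (e.symm : _ →+* MvPolynomial (Fin (n + 1)) A)
    let _ : Module (MvPolynomial (Fin n) A) N :=
      Module.compHom N (Polynomial.C : _ →+* (MvPolynomial (Fin n) A)[X])
    have : IsScalarTower (MvPolynomial (Fin n) A) (MvPolynomial (Fin n) A)[X] N :=
      .of_algebraMap_smul fun _ _ ↦ rfl
    have : IsScalarTower A (MvPolynomial (Fin n) A) N := .of_algebraMap_smul fun a x ↦ by
      change e.symm (algebraMap A (MvPolynomial (Fin n) A)[X] a) • x = a • x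
      rw [e.symm.commutes, algebraMap_smul]
    obtain ⟨d, hd⟩ := ih
    exact ⟨d + 1, hd.polynomial.of_ringEquiv e.symm.toRingEquiv fun _ _ ↦ rfl⟩

end FlatDimensionPolynomial

section ProjectiveDimension

open CategoryTheory

variable {Q : Type u} [CommRing Q]

theorem projDimLE_of_hasProjectiveDimensionLT {n : ℕ} {N : Type u} [AddCommGroup N] [Module Q N]
    (h : HasProjectiveDimensionLT (ModuleCat.of Q N) (n + 1)) : ProjDimLE Q n N := by
  induction n generalizing N with
  | zero =>
    rwa [zero_add, ← projective_iff_hasProjectiveDimensionLT_one,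
      ← IsProjective.iff_projective] at h
  | succ n ih =>
    have hsurj := Finsupp.linearCombination_id_surjective Q N
    have : Projective (ModuleCat.of Q (N →₀ Q)) := by
      rw [← IsProjective.iff_projective]
      infer_instance
    exact ⟨N →₀ Q, inferInstance, inferInstance, _, inferInstance, hsurj,
      ih (((LinearMap.shortExact_shortComplexKer hsurj).hasProjectiveDimensionLT_X₃_iff
        n this).1 h)⟩

theorem ProjDimFinite.of_generatedByRegularSequence {R' : Type u} [CommRing R'] [IsLocalRing Q]
    [IsNoetherianRing Q] [Algebra Q R'] (hsurj : Function.Surjective (algebraMap Q R'))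
    (hker : GeneratedByRegularSequence Q (RingHom.ker (algebraMap Q R'))) :
    ProjDimFinite Q R' := by
  obtain ⟨rs, hrs, hspan⟩ := hker
  have hker_smul : Ideal.ofList rs • (⊤ : Submodule Q Q) =
      LinearMap.ker (Algebra.linearMap Q R') := (Ideal.mul_top _).trans hspan
  have hmem : ∀ r ∈ rs, r ∈ maximalIdeal Q := fun r hr ↦
    le_maximalIdeal (fun h ↦ hrs.top_ne_smul (by rw [Ideal.ofList, h]; simp))
      (Ideal.subset_span hr)
  have : Projective (ModuleCat.of Q Q) := by
    rw [← IsProjective.iff_projective]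
    infer_instance
  have hdim : projectiveDimension (ModuleCat.of Q (Q ⧸ Ideal.ofList rs • (⊤ : Submodule Q Q))) ≤
      rs.length := by
    have hfree : projectiveDimension (ModuleCat.of Q Q) ≤ (0 : ℕ) :=
      (projectiveDimension_le_iff _ 0).2 (projective_iff_hasProjectiveDimensionLT_one.1 this)
    have := ModuleCat.projectiveDimension_quotient_eq_add_length_of_isWeaklyRegular
      (ModuleCat.of Q Q) rs hrs.toIsWeaklyRegular hmem
    refine this.le.trans ?_
    simpa using add_le_add_left hfree (rs.length : WithBot ℕ∞)
  rw [projectiveDimension_le_iff] at hdim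
  exact ⟨rs.length, projDimLE_of_hasProjectiveDimensionLT <| hasProjectiveDimensionLT_of_iso
    ((Submodule.quotEquivOfEq _ _ hker_smul).trans
      (LinearMap.quotKerEquivOfSurjective _ hsurj)).toModuleIso (rs.length + 1)⟩

end ProjectiveDimension

/-! ### Regular sequences modulo an ideal -/

section RegularSequences

open RingTheory.Sequence
open scoped Pointwise

section Modulo

variable {A B : Type*} [CommRing A] [CommRing B]

/-- The sequence `rs` is weakly regular on `A ⧸ I`, phrased in terms of ideals of `A` so that
inductions stay inside the ring `A`. -/
def IsWeaklyRegularModulo : Ideal A → List A → Prop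
  | _, [] => True
  | I, r :: rs => (∀ x, r * x ∈ I → x ∈ I) ∧ IsWeaklyRegularModulo (I ⊔ Ideal.span {r}) rs

theorem isWeaklyRegularModulo_iff (I : Ideal A) (rs : List A) :
    IsWeaklyRegularModulo I rs ↔ IsWeaklyRegular (A ⧸ I) rs := by
  induction rs generalizing I with
  | nil => simp [IsWeaklyRegularModulo]
  | cons r rs ih =>
    rw [isWeaklyRegular_cons_iff, IsWeaklyRegularModulo,
      isSMulRegular_quotient_iff_mem_of_smul_mem, ih]
    have hspan : (Ideal.span {r} : Submodule A A) = r • ⊤ := by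
      ext x
      simp [Ideal.mem_span_singleton', Submodule.mem_smul_pointwise_iff_exists, mul_comm]
    have hmap : Submodule.map (Submodule.mkQ I) (Ideal.span {r}) =
        r • (⊤ : Submodule A (A ⧸ I)) := by
      rw [hspan, Submodule.map_pointwise_smul, Submodule.map_top, Submodule.range_mkQ]
    exact and_congr Iff.rfl <| LinearEquiv.isWeaklyRegular_congr
      ((Submodule.quotientQuotientEquivQuotientSup I (Ideal.span {r})).symm.trans
        (Submodule.quotEquivOfEq _ _ hmap)) rs

theorem isWeaklyRegularModulo_bot_iff (rs : List A) :
    IsWeaklyRegularModulo ⊥ rs ↔ IsWeaklyRegular A rs := by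
  rw [isWeaklyRegularModulo_iff]
  exact LinearEquiv.isWeaklyRegular_congr (Submodule.quotEquivOfEqBot ⊥ rfl) rs

theorem isWeaklyRegularModulo_append (I : Ideal A) (rs ss : List A) :
    IsWeaklyRegularModulo I (rs ++ ss) ↔
      IsWeaklyRegularModulo I rs ∧ IsWeaklyRegularModulo (I ⊔ Ideal.ofList rs) ss := by
  induction rs generalizing I with
  | nil => simp [IsWeaklyRegularModulo]
  | cons r rs ih => simp [IsWeaklyRegularModulo, ih, and_assoc, Ideal.ofList_cons, sup_assoc]

theorem sup_span_singleton_le_of_sub_mem {I : Ideal A} {a b : A} (h : a - b ∈ I) :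
    I ⊔ Ideal.span {a} ≤ I ⊔ Ideal.span {b} := by
  refine sup_le le_sup_left ((Ideal.span_singleton_le_iff_mem _).2 ?_)
  rw [← sub_add_cancel a b]
  exact add_mem (Ideal.mem_sup_left h) (Ideal.mem_sup_right (Ideal.mem_span_singleton_self b))

theorem sup_span_singleton_eq_of_sub_mem {I : Ideal A} {a b : A} (h : a - b ∈ I) :
    I ⊔ Ideal.span {a} = I ⊔ Ideal.span {b} :=
  le_antisymm (sup_span_singleton_le_of_sub_mem h)
    (sup_span_singleton_le_of_sub_mem (neg_sub a b ▸ neg_mem h))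

theorem IsWeaklyRegularModulo.congr : ∀ {rs ss : List A} {I : Ideal A},
    List.Forall₂ (fun a b ↦ a - b ∈ I) rs ss → IsWeaklyRegularModulo I rs →
      IsWeaklyRegularModulo I ss
  | _, _, _, .nil, _ => trivial
  | _, _, I, .cons (a := a) (b := b) hab h, hrs => by
    refine ⟨fun x hx ↦ hrs.1 x ?_, ?_⟩
    · rw [← sub_add_cancel a b, add_mul]
      exact add_mem (I.mul_mem_right _ hab) hx
    · rw [← sup_span_singleton_eq_of_sub_mem hab]
      exact congr (h.imp fun _ _ h ↦ Ideal.mem_sup_left h) hrs.2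

theorem sup_ofList_congr : ∀ {rs ss : List A} {I : Ideal A},
    List.Forall₂ (fun a b ↦ a - b ∈ I) rs ss → I ⊔ Ideal.ofList rs = I ⊔ Ideal.ofList ss
  | _, _, _, .nil => rfl
  | _, _, I, .cons (a := a) (b := b) hab h => by
    rw [Ideal.ofList_cons, Ideal.ofList_cons, ← sup_assoc, ← sup_assoc,
      ← sup_span_singleton_eq_of_sub_mem hab]
    exact sup_ofList_congr (h.imp fun _ _ h ↦ Ideal.mem_sup_left h)

theorem exists_forall₂_sub_mem_span_singleton {J : Ideal A} {w : A} {rs : List A}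
    (hrs : ∀ r ∈ rs, r ∈ J ⊔ Ideal.span {w}) :
    ∃ vs : List A, (∀ v ∈ vs, v ∈ J) ∧ List.Forall₂ (fun a b ↦ a - b ∈ Ideal.span {w}) rs vs := by
  induction rs with
  | nil => exact ⟨[], by simp, .nil⟩
  | cons r rs ih =>
    obtain ⟨vs, hvs, h⟩ := ih fun x hx ↦ hrs x (List.mem_cons_of_mem _ hx)
    obtain ⟨v, hv, z, hz, rfl⟩ := Submodule.mem_sup.1 (hrs r List.mem_cons_self)
    exact ⟨v :: vs, List.forall_mem_cons.2 ⟨hv, hvs⟩, .cons (by simpa using hz) h⟩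

theorem isWeaklyRegularModulo_map_iff {f : A →+* B} (hf : Function.Surjective f) {I : Ideal A}
    (hI : RingHom.ker f ≤ I) (rs : List A) :
    IsWeaklyRegularModulo (I.map f) (rs.map f) ↔ IsWeaklyRegularModulo I rs := by
  induction rs generalizing I with
  | nil => exact Iff.rfl
  | cons r rs ih =>
    have hmem (x : A) : f x ∈ I.map f ↔ x ∈ I := by
      rw [← Ideal.mem_comap, Ideal.comap_map_of_surjective' f hf, sup_eq_left.2 hI]
    simp only [List.map_cons, IsWeaklyRegularModulo]
    rw [← ih (hI.trans le_sup_left), Ideal.map_sup, Ideal.map_span, Set.image_singleton,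
      hf.forall]
    simp only [← map_mul, hmem]

section Algebra

variable [Algebra A B]

theorem IsWeaklyRegularModulo.map [Module.Flat A B] {I : Ideal A} {rs : List A}
    (h : IsWeaklyRegularModulo I rs) :
    IsWeaklyRegularModulo (I.map (algebraMap A B)) (rs.map (algebraMap A B)) := by
  rw [isWeaklyRegularModulo_iff] at h ⊢
  rw [isWeaklyRegular_map_algebraMap_iff]
  have hI : (I • ⊤ : Submodule A B) = (I.map (algebraMap A B)).restrictScalars A :=
    Ideal.smul_top_eq_map I
  let e : (A ⧸ I) ⊗[A] B ≃ₗ[A] (B ⧸ (I.map (algebraMap A B)).restrictScalars A) :=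
    (TensorProduct.quotTensorEquivQuotSMul B I).trans (Submodule.quotEquivOfEq _ _ hI)
  exact (LinearEquiv.isWeaklyRegular_congr e rs).1 h.isWeaklyRegular_rTensor

theorem IsWeaklyRegularModulo.of_map [Module.FaithfullyFlat A B] {I : Ideal A} {rs : List A}
    (h : IsWeaklyRegularModulo (I.map (algebraMap A B)) (rs.map (algebraMap A B))) :
    IsWeaklyRegularModulo I rs := by
  induction rs generalizing I with
  | nil => trivial
  | cons r rs ih =>
    refine ⟨fun x hx ↦ ?_, ih ?_⟩
    · have := h.1 (algebraMap A B x) (by rw [← map_mul]; exact Ideal.mem_map_of_mem _ hx)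
      rwa [← Ideal.mem_comap, Ideal.comap_map_eq_self_of_faithfullyFlat] at this
    · rw [Ideal.map_sup, Ideal.map_span, Set.image_singleton]
      exact h.2

end Algebra

/-- The ideal `I` is generated by a weakly regular sequence of `A`. In contrast with
`GeneratedByRegularSequence`, the unit ideal is allowed, which makes the notion stable under
arbitrary flat base change. -/
def IsRegularlyGenerated (I : Ideal A) : Prop :=
  ∃ rs, IsWeaklyRegularModulo ⊥ rs ∧ Ideal.ofList rs = I

theorem generatedByRegularSequence_iff {I : Ideal A} :
    GeneratedByRegularSequence A I ↔ IsRegularlyGenerated I ∧ I ≠ ⊤ := by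
  constructor
  · rintro ⟨rs, hrs, rfl⟩
    refine ⟨⟨rs, (isWeaklyRegularModulo_bot_iff rs).2 hrs.toIsWeaklyRegular, rfl⟩, fun h ↦ ?_⟩
    refine hrs.top_ne_smul ?_
    rw [smul_eq_mul, Ideal.mul_top]
    exact h.symm
  · rintro ⟨⟨rs, hrs, rfl⟩, hne⟩
    refine ⟨rs, ⟨(isWeaklyRegularModulo_bot_iff rs).1 hrs, fun h ↦ hne ?_⟩, rfl⟩
    rw [smul_eq_mul, Ideal.mul_top] at h
    exact h.symm

theorem isRegularlyGenerated_bot : IsRegularlyGenerated (⊥ : Ideal A) :=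
  ⟨[], trivial, Ideal.ofList_nil⟩

theorem IsRegularlyGenerated.map [Algebra A B] [Module.Flat A B] {I : Ideal A}
    (h : IsRegularlyGenerated I) : IsRegularlyGenerated (I.map (algebraMap A B)) := by
  obtain ⟨rs, hrs, rfl⟩ := h
  exact ⟨rs.map (algebraMap A B), Ideal.map_bot (f := algebraMap A B) ▸ hrs.map,
    (Ideal.map_ofList _ _).symm⟩

theorem IsRegularlyGenerated.map_of_flat {f : A →+* B} (hf : f.Flat) {I : Ideal A}
    (h : IsRegularlyGenerated I) : IsRegularlyGenerated (I.map f) := by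
  let _ := f.toAlgebra
  have : Module.Flat A B := hf
  exact h.map (B := B)

theorem ker_comp_eq_sup_ofList {C : Type*} [CommRing C] {f : A →+* B} {g : B →+* C}
    (hf : Function.Surjective f) {ss : List A} (hss : Ideal.ofList (ss.map f) = RingHom.ker g) :
    RingHom.ker (g.comp f) = RingHom.ker f ⊔ Ideal.ofList ss := by
  rw [← RingHom.comap_ker, ← hss, ← Ideal.map_ofList, Ideal.comap_map_of_surjective' f hf,
    sup_comm]

theorem isWeaklyRegularModulo_ker_iff {f : A →+* B} (hf : Function.Surjective f) (ss : List A) :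
    IsWeaklyRegularModulo (RingHom.ker f) ss ↔ IsWeaklyRegularModulo ⊥ (ss.map f) := by
  rw [← isWeaklyRegularModulo_map_iff hf le_rfl, (Ideal.map_eq_bot_iff_le_ker f).2 le_rfl]

theorem IsRegularlyGenerated.ker_comp {C : Type*} [CommRing C] {f : A →+* B} {g : B →+* C}
    (hf : Function.Surjective f) (hkf : IsRegularlyGenerated (RingHom.ker f))
    (hkg : IsRegularlyGenerated (RingHom.ker g)) :
    IsRegularlyGenerated (RingHom.ker (g.comp f)) := by
  obtain ⟨rs, hrs, hker⟩ := hkf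
  obtain ⟨ss', hss, hker'⟩ := hkg
  obtain ⟨ss, rfl⟩ := List.map_surjective_iff.2 hf ss'
  refine ⟨rs ++ ss, (isWeaklyRegularModulo_append _ _ _).2 ⟨hrs, ?_⟩, ?_⟩
  · rwa [bot_sup_eq, hker, isWeaklyRegularModulo_ker_iff hf]
  · rw [Ideal.ofList_append, hker, ker_comp_eq_sup_ofList hf hker']

end Modulo

section Local

variable {A : Type*} [CommRing A] [IsLocalRing A]

theorem mem_sup_maximalIdeal_mul_or_exists_unit (I : Ideal A) (rs : List A) {b : A}
    (hb : b ∈ I ⊔ Ideal.ofList rs) : b ∈ I ⊔ maximalIdeal A * Ideal.ofList rs ∨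
      ∃ l₁ x l₂ u, rs = l₁ ++ x :: l₂ ∧ IsUnit u ∧ b - u * x ∈ I ⊔ Ideal.ofList (l₁ ++ l₂) := by
  induction rs generalizing b with
  | nil => exact .inl (by simpa using hb)
  | cons x l ih =>
    rw [Ideal.ofList_cons, sup_left_comm] at hb
    obtain ⟨c, hc, y, hy, rfl⟩ := Submodule.mem_sup.1 hb
    obtain ⟨u, rfl⟩ := Ideal.mem_span_singleton'.1 hc
    by_cases hu : IsUnit u
    · exact .inr ⟨[], x, l, u, rfl, hu, by simpa using hy⟩
    rcases ih hy with h | ⟨l₁, x', l₂, v, rfl, hv, h⟩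
    · left
      rw [Ideal.ofList_cons, Ideal.mul_sup, sup_left_comm]
      exact add_mem (Ideal.mem_sup_left (Ideal.mul_mem_mul ((mem_maximalIdeal u).2 hu)
        (Ideal.mem_span_singleton_self x))) (Ideal.mem_sup_right h)
    · refine .inr ⟨x :: l₁, x', l₂, v, rfl, hv, ?_⟩
      rw [List.cons_append, Ideal.ofList_cons, sup_left_comm, add_sub_assoc]
      exact add_mem (Ideal.mem_sup_left hc) (Ideal.mem_sup_right h)

variable [IsNoetherianRing A]

theorem IsWeaklyRegularModulo.perm {I : Ideal A} {rs ss : List A}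
    (h : IsWeaklyRegularModulo I rs) (hp : rs.Perm ss) (hm : ∀ r ∈ rs, r ∈ maximalIdeal A) :
    IsWeaklyRegularModulo I ss := by
  rw [isWeaklyRegularModulo_iff] at *
  exact IsLocalRing.isWeaklyRegular_of_perm_of_subset_maximalIdeal h hp hm

theorem IsWeaklyRegularModulo.exchange {I : Ideal A} {rs : List A}
    (hrs : IsWeaklyRegularModulo I rs) (hm : ∀ r ∈ rs, r ∈ maximalIdeal A) {b : A}
    (hbm : b ∈ maximalIdeal A) (hb : b ∈ I ⊔ Ideal.ofList rs)
    (hb' : b ∉ I ⊔ maximalIdeal A * Ideal.ofList rs) :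
    ∃ ss, rs.length = ss.length + 1 ∧ IsWeaklyRegularModulo I (b :: ss) ∧
      I ⊔ Ideal.ofList (b :: ss) = I ⊔ Ideal.ofList rs ∧ ∀ r ∈ ss, r ∈ maximalIdeal A := by
  obtain ⟨l₁, x, l₂, u, rfl, hu, h⟩ :=
    (mem_sup_maximalIdeal_mul_or_exists_unit I rs hb).resolve_left hb'
  have hperm : (l₁ ++ x :: l₂).Perm ((l₁ ++ l₂) ++ [x]) :=
    List.perm_middle.trans (List.perm_append_singleton _ _).symm
  have hx := (isWeaklyRegularModulo_append _ _ _).1 (hrs.perm hperm hm)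
  have hspan : (I ⊔ Ideal.ofList (l₁ ++ l₂)) ⊔ Ideal.span {b} =
      (I ⊔ Ideal.ofList (l₁ ++ l₂)) ⊔ Ideal.span {x} := by
    rw [sup_span_singleton_eq_of_sub_mem h, Ideal.span_singleton_mul_left_unit hu]
  have hreg (y : A) (hy : b * y ∈ I ⊔ Ideal.ofList (l₁ ++ l₂)) :
      y ∈ I ⊔ Ideal.ofList (l₁ ++ l₂) := by
    refine hx.2.1 y ((Ideal.unit_mul_mem_iff_mem _ hu).1 ?_)
    rw [show u * (x * y) = b * y - (b - u * x) * y by ring]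
    exact sub_mem hy (Ideal.mul_mem_right _ _ h)
  have hm' (r : A) (hr : r ∈ l₁ ++ l₂) : r ∈ maximalIdeal A := by
    refine hm r ?_
    simp only [List.mem_append, List.mem_cons] at hr ⊢
    tauto
  refine ⟨l₁ ++ l₂, by simp; omega, ?_, ?_, hm'⟩
  · have : IsWeaklyRegularModulo I ((l₁ ++ l₂) ++ [b]) :=
      (isWeaklyRegularModulo_append _ _ _).2 ⟨hx.1, hreg, trivial⟩
    refine this.perm (List.perm_append_singleton _ _) fun r hr ↦ ?_
    rcases List.mem_append.1 hr with hr | hr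
    · exact hm' r hr
    · rwa [List.mem_singleton.1 hr]
  · have hofList : Ideal.ofList (l₁ ++ x :: l₂) = Ideal.ofList ((l₁ ++ l₂) ++ [x]) := by
      simp only [Ideal.ofList, hperm.mem_iff]
    rw [hofList, Ideal.ofList_append _ [x], Ideal.ofList_singleton, Ideal.ofList_cons,
      sup_comm (Ideal.span _), ← sup_assoc, ← sup_assoc, hspan]

theorem IsWeaklyRegularModulo.exists_mem_of_sup_span_eq {s : Set A}
    (hs : ∀ x ∈ s, x ∈ maximalIdeal A) {I : Ideal A} {rs : List A}
    (hrs : IsWeaklyRegularModulo I rs) (hm : ∀ r ∈ rs, r ∈ maximalIdeal A)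
    (hspan : I ⊔ Ideal.span s = I ⊔ Ideal.ofList rs) :
    ∃ ss : List A, (∀ r ∈ ss, r ∈ s) ∧ IsWeaklyRegularModulo I ss ∧
      I ⊔ Ideal.ofList ss = I ⊔ Ideal.ofList rs := by
  induction hn : rs.length generalizing I rs with
  | zero =>
    obtain rfl := List.length_eq_zero_iff.1 hn
    exact ⟨[], by simp, trivial, rfl⟩
  | succ n ih =>
    by_cases h : ∀ b ∈ s, b ∈ I ⊔ maximalIdeal A * Ideal.ofList rs
    · have hle : I ⊔ Ideal.ofList rs ≤ I ⊔ maximalIdeal A • Ideal.ofList rs := by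
        rw [← hspan]
        exact sup_le le_sup_left (Ideal.span_le.2 h)
      have hrsI : Ideal.ofList rs ≤ I :=
        Submodule.le_of_le_smul_of_le_jacobson_bot (IsNoetherian.noetherian _)
          (IsLocalRing.maximalIdeal_le_jacobson _) (le_sup_right.trans hle)
      exact ⟨[], by simp, trivial, by simp [hrsI]⟩
    · push Not at h
      obtain ⟨b, hbs, hb⟩ := h
      obtain ⟨as, hlen, has, hofList, hm'⟩ := hrs.exchange hm (hs b hbs)
        (hspan ▸ Ideal.mem_sup_right (Ideal.subset_span hbs)) hb
      have hofList' : (I ⊔ Ideal.span {b}) ⊔ Ideal.ofList as = I ⊔ Ideal.ofList rs := by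
        rw [← hofList, Ideal.ofList_cons, sup_assoc]
      have hbspan : Ideal.span {b} ≤ Ideal.span s :=
        Ideal.span_mono (Set.singleton_subset_iff.2 hbs)
      obtain ⟨ss, hss, hreg, hofList''⟩ := ih has.2 hm'
        (by rw [hofList', ← hspan, sup_assoc, sup_eq_right.2 hbspan]) (by omega)
      refine ⟨b :: ss, by simpa using ⟨hbs, hss⟩, ⟨has.1, hreg⟩, ?_⟩
      rw [Ideal.ofList_cons, ← sup_assoc, hofList'', hofList']

theorem IsRegularlyGenerated.exists_list_of_span_range {ι : Type*} {f : ι → A}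
    (h : IsRegularlyGenerated (Ideal.span (Set.range f))) (hne : Ideal.span (Set.range f) ≠ ⊤) :
    ∃ l : List ι, IsWeaklyRegularModulo ⊥ (l.map f) ∧
      Ideal.ofList (l.map f) = Ideal.span (Set.range f) := by
  obtain ⟨rs, hrs, hspan⟩ := h
  have hle := le_maximalIdeal hne
  have hm (r : A) (hr : r ∈ rs) : r ∈ maximalIdeal A := hle (hspan ▸ Ideal.subset_span hr)
  obtain ⟨ss, hss, hreg, hofList⟩ := hrs.exists_mem_of_sup_span_eq
    (fun x hx ↦ hle (Ideal.subset_span hx)) hm (by rw [hspan])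
  obtain ⟨l, rfl⟩ : ss ∈ Set.range (List.map f) := Set.range_list_map f ▸ hss
  exact ⟨l, hreg, by simpa only [bot_sup_eq, hspan] using hofList⟩

theorem IsRegularlyGenerated.of_map {P : Type*} [CommRing P] [Algebra P A]
    [Module.FaithfullyFlat P A] {I : Ideal P} (h : IsRegularlyGenerated (I.map (algebraMap P A)))
    (hI : I ≠ ⊤) : IsRegularlyGenerated I := by
  have hne : I.map (algebraMap P A) ≠ ⊤ := fun htop ↦ hI <| by
    rw [← Ideal.comap_map_eq_self_of_faithfullyFlat (B := A) I, htop, Ideal.comap_top]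
  have hmap : I.map (algebraMap P A) = Ideal.span (Set.range fun x : I ↦ algebraMap P A x) := by
    rw [Ideal.map, Set.image_eq_range]
    rfl
  obtain ⟨l, hreg, hspan⟩ := (hmap ▸ h).exists_list_of_span_range (hmap ▸ hne)
  have hl : (l.map Subtype.val).map (algebraMap P A) = l.map fun x : I ↦ algebraMap P A x :=
    List.map_map
  refine ⟨l.map Subtype.val, .of_map (B := A) (by rwa [Ideal.map_bot, hl]), ?_⟩
  have := congrArg (Ideal.comap (algebraMap P A)) (hspan.trans hmap.symm)
  rwa [← hl, ← Ideal.map_ofList, Ideal.comap_map_eq_self_of_faithfullyFlat,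
    Ideal.comap_map_eq_self_of_faithfullyFlat] at this

end Local

section Cancellation

variable {A : Type*} [CommRing A] [IsLocalRing A] {J : Ideal A} {w : A}

theorem notMem_maximalIdeal_mul_sup_span_singleton (hw : ∀ x, w * x ∈ J → x ∈ J)
    (hJ : J ≠ ⊤) : w ∉ maximalIdeal A * (J ⊔ Ideal.span {w}) := by
  rw [Ideal.mul_sup]
  intro h
  obtain ⟨y, hy, z, hz, hyz⟩ := Submodule.mem_sup.1 h
  rw [mul_comm, Ideal.mem_span_singleton_mul] at hz
  obtain ⟨μ, hμ, rfl⟩ := hz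
  have hmem : w * (1 - μ) ∈ J := by
    rw [show w * (1 - μ) = y by linear_combination -hyz]
    exact Ideal.mul_le_right hy
  have hone := add_mem (le_maximalIdeal hJ (hw _ hmem)) hμ
  rw [sub_add_cancel] at hone
  exact (Ideal.ne_top_iff_one _).1 (maximalIdeal.isMaximal A).ne_top hone

variable [IsNoetherianRing A]

theorem eq_of_span_singleton_sup_eq (hw : ∀ x, w * x ∈ J → x ∈ J) (hwm : w ∈ maximalIdeal A)
    {V : Ideal A} (hV : V ≤ J) (h : Ideal.span {w} ⊔ V = J ⊔ Ideal.span {w}) : V = J := by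
  refine le_antisymm hV (Submodule.le_of_le_smul_of_le_jacobson_bot (IsNoetherian.noetherian _)
    (IsLocalRing.maximalIdeal_le_jacobson _) fun j hj ↦ ?_)
  have hj' : j ∈ Ideal.span {w} ⊔ V := h ▸ Ideal.mem_sup_left hj
  obtain ⟨z, hz, y, hy, rfl⟩ := Submodule.mem_sup.1 hj'
  obtain ⟨c, rfl⟩ := Ideal.mem_span_singleton'.1 hz
  have hc : c ∈ J := hw c <| by
    have := sub_mem hj (hV hy)
    rwa [add_sub_cancel_right, mul_comm] at this
  exact add_mem (Ideal.mem_sup_right (mul_comm w c ▸ Ideal.mul_mem_mul hwm hc))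
    (Ideal.mem_sup_left hy)

theorem IsRegularlyGenerated.of_sup_span_singleton
    (h : IsRegularlyGenerated (J ⊔ Ideal.span {w})) (hw : ∀ x, w * x ∈ J → x ∈ J)
    (hne : J ⊔ Ideal.span {w} ≠ ⊤) : IsRegularlyGenerated J := by
  obtain ⟨rs, hrs, hspan⟩ := h
  have hle := le_maximalIdeal hne
  have hwJ : w ∈ J ⊔ Ideal.span {w} := Ideal.mem_sup_right (Ideal.mem_span_singleton_self w)
  have hJ : J ≠ ⊤ := ne_top_of_le_ne_top hne le_sup_left
  obtain ⟨as, -, has, hofList, -⟩ :=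
    hrs.exchange (fun r hr ↦ hle (hspan ▸ Ideal.subset_span hr)) (hle hwJ)
      (by rwa [bot_sup_eq, hspan])
      (by rw [bot_sup_eq, hspan]; exact notMem_maximalIdeal_mul_sup_span_singleton hw hJ)
  rw [bot_sup_eq, bot_sup_eq, hspan] at hofList
  obtain ⟨vs, hvs, hsub⟩ := exists_forall₂_sub_mem_span_singleton (J := J) (w := w) (rs := as)
    fun r hr ↦ hofList ▸ Ideal.subset_span (List.mem_cons_of_mem _ hr)
  have hwvs : IsWeaklyRegularModulo ⊥ (w :: vs) :=
    ⟨has.1, by rw [bot_sup_eq]; exact .congr hsub (by simpa using has.2)⟩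
  have hvsw : IsWeaklyRegularModulo ⊥ (vs ++ [w]) :=
    hwvs.perm (List.perm_append_singleton _ _).symm (List.forall_mem_cons.2
      ⟨hle hwJ, fun r hr ↦ hle (Ideal.mem_sup_left (hvs r hr))⟩)
  refine ⟨vs, ((isWeaklyRegularModulo_append _ _ _).1 hvsw).1,
    eq_of_span_singleton_sup_eq hw (hle hwJ) (Ideal.span_le.2 hvs) ?_⟩
  rw [← sup_ofList_congr hsub, ← Ideal.ofList_cons, hofList]

theorem IsRegularlyGenerated.of_sup_ofList {ws : List A}
    (h : IsRegularlyGenerated (J ⊔ Ideal.ofList ws)) (hws : IsWeaklyRegularModulo J ws)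
    (hne : J ⊔ Ideal.ofList ws ≠ ⊤) : IsRegularlyGenerated J := by
  induction ws generalizing J with
  | nil => simpa using h
  | cons w ws ih =>
    rw [Ideal.ofList_cons, ← sup_assoc] at h hne
    exact (ih h hws.2 hne).of_sup_span_singleton hws.1 (ne_top_of_le_ne_top hne le_sup_left)

theorem IsRegularlyGenerated.of_ker_comp {B C : Type*} [CommRing B] [CommRing C] [Nontrivial C]
    {f : A →+* B} {g : B →+* C} (hf : Function.Surjective f)
    (hkgf : IsRegularlyGenerated (RingHom.ker (g.comp f)))
    (hkg : IsRegularlyGenerated (RingHom.ker g)) : IsRegularlyGenerated (RingHom.ker f) := by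
  obtain ⟨ws', hws, hspan⟩ := hkg
  obtain ⟨ws, rfl⟩ := List.map_surjective_iff.2 hf ws'
  have hker := ker_comp_eq_sup_ofList hf hspan
  exact (hker ▸ hkgf).of_sup_ofList ((isWeaklyRegularModulo_ker_iff hf ws).2 hws)
    (hker ▸ RingHom.ker_ne_top _)

end Cancellation

end RegularSequences

/-! ### Regular sequences in a closed fibre -/

section LocalCriterion

open RingTheory.Sequence
open scoped Pointwise

section Modules

variable {A : Type*} [CommRing A] {M M' M'' : Type*} [AddCommGroup M] [Module A M]
  [AddCommGroup M'] [Module A M'] [AddCommGroup M''] [Module A M'']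

theorem injective_quotSMulTop_map {r : A} {f : M' →ₗ[A] M} {g : M →ₗ[A] M''}
    (hf : Function.Injective f) (hfg : Function.Exact f g) (hr : IsSMulRegular M'' r) :
    Function.Injective (QuotSMulTop.map r f) := by
  have hexact : Function.Exact (0 : PUnit.{1} →ₗ[A] M') f := fun x ↦
    ⟨fun hx ↦ ⟨0, by simpa using (hf (hx.trans (map_zero f).symm)).symm⟩, by
      rintro ⟨y, rfl⟩; simp⟩
  rw [injective_iff_map_eq_zero]
  intro x hx
  obtain ⟨y, rfl⟩ :=
    (QuotSMulTop.map_first_exact_on_four_term_exact_of_isSMulRegular_last hexact hfg hr x).1 hx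
  obtain ⟨y, rfl⟩ := Submodule.mkQ_surjective _ y
  simp [QuotSMulTop.map]

theorem isWeaklyRegular_of_exact {rs : List A} {f : M' →ₗ[A] M} {g : M →ₗ[A] M''}
    (hf : Function.Injective f) (hg : Function.Surjective g) (hfg : Function.Exact f g)
    (h' : IsWeaklyRegular M' rs) (h'' : IsWeaklyRegular M'' rs) : IsWeaklyRegular M rs := by
  induction rs generalizing M M' M'' with
  | nil => exact IsWeaklyRegular.nil _ _
  | cons r rs ih =>
    rw [isWeaklyRegular_cons_iff] at *
    exact ⟨isSMulRegular_of_range_eq_ker hf (LinearMap.exact_iff.1 hfg).symm h'.1 h''.1,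
      ih (injective_quotSMulTop_map hf hfg h''.1) (QuotSMulTop.map_surjective r hg)
        (QuotSMulTop.map_exact r hfg hg) h'.2 h''.2⟩

theorem isWeaklyRegular_finsupp {rs : List A} (ι : Type*) (h : IsWeaklyRegular M rs) :
    IsWeaklyRegular (ι →₀ M) rs := by
  classical
  exact (LinearEquiv.isWeaklyRegular_congr (TensorProduct.finsuppScalarRight A A M ι) rs).1
    (h.isWeaklyRegular_rTensor (M₂ := ι →₀ A))

end Modules

section ClosedFibre

variable {S D : Type*} [CommRing S] [CommRing D] [IsLocalRing S] [Algebra S D]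

theorem isWeaklyRegular_tensorProduct_of_maximalIdeal_smul_eq_bot {rs : List D}
    (hrs : IsWeaklyRegularModulo ((maximalIdeal S).map (algebraMap S D)) rs)
    {V : Type*} [AddCommGroup V] [Module (S ⧸ maximalIdeal S) V] [Module S V]
    [IsScalarTower S (S ⧸ maximalIdeal S) V] : IsWeaklyRegular (D ⊗[S] V) rs := by
  classical
  let _ : Field (S ⧸ maximalIdeal S) := Ideal.Quotient.field _
  let b := Module.Free.chooseBasis (S ⧸ maximalIdeal S) V
  let e := (TensorProduct.AlgebraTensorModule.congr (LinearEquiv.refl D D)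
      (b.repr.restrictScalars S)).trans
    (TensorProduct.finsuppRight S D D (S ⧸ maximalIdeal S) _)
  refine (LinearEquiv.isWeaklyRegular_congr e rs).2 (isWeaklyRegular_finsupp _ ?_)
  rwa [← LinearEquiv.isWeaklyRegular_congr
    (Ideal.qoutMapEquivTensorQout D (I := maximalIdeal S)), ← isWeaklyRegularModulo_iff]

theorem isWeaklyRegular_tensorProduct_of_pow_smul_eq_bot [Module.Flat S D] {rs : List D}
    (hrs : IsWeaklyRegularModulo ((maximalIdeal S).map (algebraMap S D)) rs) (j : ℕ)
    {V : Type*} [AddCommGroup V] [Module S V]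
    (hV : (maximalIdeal S) ^ j • (⊤ : Submodule S V) = ⊥) : IsWeaklyRegular (D ⊗[S] V) rs := by
  induction j generalizing V with
  | zero =>
    have : Subsingleton V := by
      rw [pow_zero, Ideal.one_eq_top, Submodule.top_smul] at hV
      exact (Submodule.subsingleton_iff S).1 (subsingleton_of_bot_eq_top hV.symm)
    rw [isWeaklyRegular_iff_Fin]
    exact fun i x y _ ↦ Subsingleton.elim x y
  | succ j ih =>
    set N : Submodule S V := maximalIdeal S • ⊤
    have hN0 : (maximalIdeal S) ^ j • (⊤ : Submodule S N) = ⊥ := by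
      apply Submodule.map_injective_of_injective N.injective_subtype
      rw [Submodule.map_smul'', Submodule.map_top, Submodule.range_subtype, Submodule.map_bot,
        ← hV, pow_succ, Submodule.mul_smul]
    exact isWeaklyRegular_of_exact
      (f := TensorProduct.AlgebraTensorModule.lTensor D D N.subtype)
      (g := TensorProduct.AlgebraTensorModule.lTensor D D N.mkQ)
      (Module.Flat.lTensor_preserves_injective_linearMap N.subtype N.injective_subtype)
      (LinearMap.lTensor_surjective D N.mkQ_surjective)
      (lTensor_exact D (LinearMap.exact_subtype_mkQ N) N.mkQ_surjective)
      (ih hN0) (isWeaklyRegular_tensorProduct_of_maximalIdeal_smul_eq_bot hrs)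

end ClosedFibre

section LocalRings

theorem map_maximalIdeal_le (S D : Type*) [CommRing S] [CommRing D] [IsLocalRing S]
    [IsLocalRing D] [Algebra S D] [IsLocalHom (algebraMap S D)] :
    (maximalIdeal S).map (algebraMap S D) ≤ maximalIdeal D :=
  ((IsLocalRing.local_hom_TFAE (algebraMap S D)).out 0 2).1 ‹_›

variable {D : Type*} [CommRing D] [IsLocalRing D] [IsNoetherianRing D]

theorem mem_of_forall_mem_sup_pow {I N : Ideal D} (hN : N ≠ ⊤) {x : D}
    (h : ∀ j : ℕ, x ∈ I ⊔ N ^ j) : x ∈ I := by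
  have hmem : (Ideal.Quotient.mk I x : D ⧸ I) ∈ (⨅ j : ℕ, N ^ j • ⊤ : Submodule D (D ⧸ I)) := by
    refine (Submodule.mem_iInf _).2 fun j ↦ ?_
    obtain ⟨i, hi, y, hy, rfl⟩ := Submodule.mem_sup.1 (h j)
    rw [map_add, Ideal.Quotient.eq_zero_iff_mem.2 hi, zero_add, ← mul_one y, map_mul]
    exact Submodule.smul_mem_smul hy (Submodule.mem_top (x := Ideal.Quotient.mk I 1))
  rw [Ideal.iInf_pow_smul_eq_bot_of_isLocalRing N hN] at hmem
  exact Ideal.Quotient.eq_zero_iff_mem.1 hmem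

theorem IsWeaklyRegularModulo.of_forall_sup_pow {I N : Ideal D} (hN : N ≠ ⊤) {rs : List D}
    (h : ∀ j : ℕ, IsWeaklyRegularModulo (I ⊔ N ^ j) rs) : IsWeaklyRegularModulo I rs := by
  induction rs generalizing I with
  | nil => trivial
  | cons r rs ih =>
    refine ⟨fun x hx ↦ mem_of_forall_mem_sup_pow hN fun j ↦
      (h j).1 x (Ideal.mem_sup_left hx), ih fun j ↦ ?_⟩
    rw [sup_right_comm]
    exact (h j).2

variable {S : Type*} [CommRing S] [IsLocalRing S] [Algebra S D]

theorem IsWeaklyRegularModulo.bot_of_closedFibre [Module.Flat S D]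
    [IsLocalHom (algebraMap S D)] {rs : List D}
    (hrs : IsWeaklyRegularModulo ((maximalIdeal S).map (algebraMap S D)) rs) :
    IsWeaklyRegularModulo ⊥ rs := by
  refine .of_forall_sup_pow (ne_top_of_le_ne_top (maximalIdeal.isMaximal D).ne_top
    (map_maximalIdeal_le S D)) fun j ↦ ?_
  have hpow : (maximalIdeal S) ^ j • (⊤ : Submodule S (S ⧸ maximalIdeal S ^ j)) = ⊥ := by
    rw [← Submodule.le_annihilator_iff, Submodule.annihilator_top, Ideal.annihilator_quotient]
  have := isWeaklyRegular_tensorProduct_of_pow_smul_eq_bot hrs j hpow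
  rwa [← LinearEquiv.isWeaklyRegular_congr (Ideal.qoutMapEquivTensorQout D),
    ← isWeaklyRegularModulo_iff, Ideal.map_pow, ← bot_sup_eq (_ ^ j)] at this

end LocalRings

section RegularLocal

variable {A B : Type*} [CommRing A] [CommRing B]

theorem isRegularLocal_iff [IsNoetherianRing A] [IsLocalRing A] :
    IsRegularLocal A ↔ IsRegularlyGenerated (maximalIdeal A) := by
  have : GeneratedByRegularSequence A (maximalIdeal A) ↔ IsRegularlyGenerated (maximalIdeal A) :=
    generatedByRegularSequence_iff.trans (and_iff_left (maximalIdeal.isMaximal A).ne_top)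
  exact ⟨fun ⟨_, _, h⟩ ↦ this.1 h, fun h ↦ ⟨‹_›, ‹_›, this.2 h⟩⟩

theorem IsRegularLocal.of_ringEquiv (h : IsRegularLocal A) (e : A ≃+* B) : IsRegularLocal B := by
  have := h.1
  obtain ⟨hlocal, -⟩ := h.2
  have := isNoetherianRing_of_ringEquiv A e
  have := e.isLocalRing
  let _ : Algebra A B := e.toRingHom.toAlgebra
  have : Module.Flat A B := RingHom.Flat.of_bijective e.bijective
  rw [isRegularLocal_iff] at h ⊢
  convert h.map (B := B)
  exact (IsLocalRing.map_maximalIdeal_of_surjective _ e.surjective).symm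

end RegularLocal

section FlatQuotient

variable {S D V : Type*} [CommRing S] [CommRing D] [CommRing V] [Algebra S D] [Algebra S V]
  {g : D →ₐ[S] V}

theorem mem_map_mul_ker_of_flat [Module.Flat S V] (hg : Function.Surjective g) {I : Ideal S}
    {z : D} (hz : z ∈ I.map (algebraMap S D)) (hgz : g z = 0) :
    z ∈ I.map (algebraMap S D) * RingHom.ker g := by
  obtain ⟨m, d, y, rfl⟩ := (Submodule.mem_span_set' (R := D)).1 hz
  choose a ha hay using fun i ↦ (y i).2
  have hrel : ∑ i, a i • g (d i) = 0 := by
    simpa [Algebra.smul_def, ← hay, mul_comm] using hgz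
  obtain ⟨κ, b, v, hv, hb⟩ := Module.Flat.isTrivialRelation_of_sum_smul_eq_zero (R := S) (M := V)
    (f := a) (x := fun i ↦ g (d i)) hrel
  choose v' hv' using fun j ↦ hg (v j)
  have hker (i : Fin m) : d i - ∑ j, algebraMap S D (b i j) * v' j ∈ RingHom.ker g := by
    rw [RingHom.mem_ker, map_sub, show g (d i) = _ from hv i, map_sum]
    simp [hv', Algebra.smul_def]
  have hzero : ∑ i, algebraMap S D (a i) * ∑ j, algebraMap S D (b i j) * v' j = 0 := by
    simp only [Finset.mul_sum]
    rw [Finset.sum_comm]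
    refine Finset.sum_eq_zero fun j _ ↦ ?_
    simpa [Finset.sum_mul, mul_assoc] using congrArg (fun t ↦ algebraMap S D t * v' j) (hb j)
  have hsum : ∑ i, d i • (y i : D) =
      ∑ i, algebraMap S D (a i) * (d i - ∑ j, algebraMap S D (b i j) * v' j) := by
    simp only [mul_sub, Finset.sum_sub_distrib, hzero, sub_zero, smul_eq_mul]
    simp only [hay, mul_comm]
  rw [hsum]
  exact sum_mem fun i _ ↦ Ideal.mul_mem_mul (Ideal.mem_map_of_mem _ (ha i)) (hker i)

variable [IsLocalRing S] [IsLocalRing D] [IsLocalRing V]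

theorem map_mk_ker_eq_map_mk_maximalIdeal (hg : Function.Surjective g)
    (hV : maximalIdeal V = (maximalIdeal S).map (algebraMap S V)) :
    (RingHom.ker g).map (Ideal.Quotient.mk ((maximalIdeal S).map (algebraMap S D))) =
      (maximalIdeal D).map (Ideal.Quotient.mk ((maximalIdeal S).map (algebraMap S D))) := by
  set nD := (maximalIdeal S).map (algebraMap S D)
  refine le_antisymm (Ideal.map_mono (le_maximalIdeal (RingHom.ker_ne_top _))) ?_
  have hmap : nD.map (g : D →+* V) = maximalIdeal V := by
    rw [hV, Ideal.map_map, AlgHom.comp_algebraMap]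
  have hlocal : IsLocalHom (g : D →+* V) := .of_surjective _ hg
  have hcomap : maximalIdeal D = RingHom.ker (g : D →+* V) ⊔ nD := by
    have : (maximalIdeal V).comap (g : D →+* V) = maximalIdeal D :=
      ((IsLocalRing.local_hom_TFAE (g : D →+* V)).out 0 4).1 hlocal
    rw [← this, ← hmap, Ideal.comap_map_of_surjective' (g : D →+* V) hg, sup_comm]
  rw [hcomap, Ideal.map_sup, Ideal.map_quotient_self, sup_bot_eq]
  rfl

theorem isRegularlyGenerated_ker_of_isRegularLocal_closedFibre [IsNoetherianRing D]
    [Module.Flat S D] [IsLocalHom (algebraMap S D)] [Module.Flat S V]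
    (hD : IsRegularLocal (D ⧸ (maximalIdeal S).map (algebraMap S D)))
    (hV : maximalIdeal V = (maximalIdeal S).map (algebraMap S V)) (hg : Function.Surjective g) :
    IsRegularlyGenerated (RingHom.ker g) := by
  obtain ⟨_, hregular⟩ := hD.2
  set nD := (maximalIdeal S).map (algebraMap S D) with hnD
  have hmap : maximalIdeal (D ⧸ nD) =
      Ideal.span (Set.range fun x : RingHom.ker g ↦ Ideal.Quotient.mk nD x) := by
    rw [← IsLocalRing.map_maximalIdeal_of_surjective _ Ideal.Quotient.mk_surjective,
      ← map_mk_ker_eq_map_mk_maximalIdeal hg hV, Ideal.map, Set.image_eq_range]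
    rfl
  rw [generatedByRegularSequence_iff, hmap] at hregular
  obtain ⟨l, hreg, hspan⟩ := IsRegularlyGenerated.exists_list_of_span_range hregular.1 hregular.2
  set rs : List D := l.map Subtype.val
  have hrs_map : rs.map (Ideal.Quotient.mk nD) =
      l.map fun x : RingHom.ker g ↦ Ideal.Quotient.mk nD x :=
    List.map_map
  have hreg' : IsWeaklyRegularModulo nD rs := by
    rw [← Ideal.mk_ker (I := nD), isWeaklyRegularModulo_ker_iff Ideal.Quotient.mk_surjective,
      hrs_map]
    exact hreg
  have hrs_le : Ideal.ofList rs ≤ RingHom.ker g := by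
    refine Ideal.span_le.2 fun r hr ↦ ?_
    obtain ⟨x, -, rfl⟩ := List.mem_map.1 hr
    exact x.2
  refine ⟨rs, hreg'.bot_of_closedFibre, le_antisymm hrs_le
    (Submodule.le_of_le_smul_of_le_jacobson_bot (IsNoetherian.noetherian _)
      ((map_maximalIdeal_le S D).trans (IsLocalRing.maximalIdeal_le_jacobson _)) fun z hz ↦ ?_)⟩
  obtain ⟨y, hy, hyz⟩ : ∃ y ∈ Ideal.ofList rs, Ideal.Quotient.mk nD y = Ideal.Quotient.mk nD z := by
    rw [← Ideal.mem_map_iff_of_surjective _ Ideal.Quotient.mk_surjective, Ideal.map_ofList,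
      hrs_map, hspan]
    exact Ideal.subset_span ⟨⟨z, hz⟩, rfl⟩
  rw [← add_sub_cancel y z]
  exact add_mem (Ideal.mem_sup_left hy) (Ideal.mem_sup_right
    (mem_map_mul_ker_of_flat hg (Ideal.Quotient.eq.1 hyz.symm) (sub_mem hz (hrs_le hy))))

end FlatQuotient

end LocalCriterion

section Evaluation

variable {A : Type*} [CommRing A]

open Polynomial in
theorem isRegularlyGenerated_ker_evalRingHom (a : A) :
    IsRegularlyGenerated (RingHom.ker (evalRingHom a)) := by
  refine ⟨[X - C a], ⟨fun p hp ↦ ?_, trivial⟩, ?_⟩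
  · exact (monic_X_sub_C a).mul_right_eq_zero_iff.1 hp
  · rw [ker_evalRingHom, Ideal.ofList_singleton]

theorem isRegularlyGenerated_ker_eval {n : ℕ} (a : Fin n → A) :
    IsRegularlyGenerated (RingHom.ker (MvPolynomial.eval a)) := by
  induction n with
  | zero =>
    convert isRegularlyGenerated_bot
    rw [← RingHom.injective_iff_ker_eq_bot]
    intro p q h
    rw [MvPolynomial.eq_C_of_isEmpty p, MvPolynomial.eq_C_of_isEmpty q] at h ⊢
    simpa using h
  | succ n ih =>
    let e : MvPolynomial (Fin (n + 1)) A →+* Polynomial (MvPolynomial (Fin n) A) :=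
      (MvPolynomial.finSuccEquiv A n).toRingHom
    let f : MvPolynomial (Fin n) A →+* A := MvPolynomial.eval (Fin.tail a)
    have hf : Function.Surjective f := fun x ↦ ⟨MvPolynomial.C x, by simp [f]⟩
    have hcomp : MvPolynomial.eval a =
        ((Polynomial.evalRingHom (a 0)).comp (Polynomial.mapRingHom f)).comp e := by
      refine RingHom.ext fun p ↦ ?_
      conv_lhs => rw [← Fin.cons_self_tail a]
      exact MvPolynomial.eval_eq_eval_mv_eval' _ _ p
    have hker_e : RingHom.ker e = ⊥ :=
      (RingHom.injective_iff_ker_eq_bot e).1 (MvPolynomial.finSuccEquiv A n).injective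
    have hker_map : IsRegularlyGenerated (RingHom.ker (Polynomial.mapRingHom f)) := by
      rw [Polynomial.ker_mapRingHom]
      exact (ih _).map
    rw [hcomp]
    exact .ker_comp (MvPolynomial.finSuccEquiv A n).surjective (hker_e ▸ isRegularlyGenerated_bot)
      (.ker_comp (Polynomial.map_surjective f hf) hker_map (isRegularlyGenerated_ker_evalRingHom _))

end Evaluation

/-! ### Separable field extensions -/

section Separable

variable {k ℓ : Type u} [Field k] [Field ℓ] [Algebra k ℓ]

theorem IsSeparableFieldExtension.linearIndepOn_pow (h : IsSeparableFieldExtension k ℓ) (p : ℕ)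
    [Fact p.Prime] [CharP k p] {s : Finset ℓ} (hs : LinearIndepOn k id (s : Set ℓ)) :
    LinearIndepOn k (· ^ p) (s : Set ℓ) := by
  let K := AlgebraicClosure k
  have hp : p ≠ 0 := NeZero.ne p
  have : IsReduced (K ⊗[k] ℓ) := h K _ _
  have : CharP (K ⊗[k] ℓ) p :=
    charP_of_injective_algebraMap (algebraMap k (K ⊗[k] ℓ)).injective p
  rw [linearIndepOn_finset_iff]
  intro c hc
  choose d hd using fun j ↦ IsAlgClosed.exists_pow_nat_eq (algebraMap k K (c j)) (NeZero.pos p)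
  have hpow (j : ℓ) : (d j ⊗ₜ[k] j) ^ p = (1 : K) ⊗ₜ[k] (c j • j ^ p) := by
    rw [Algebra.TensorProduct.tmul_pow, hd, Algebra.algebraMap_eq_smul_one,
      TensorProduct.smul_tmul]
  have hzero : ∑ j ∈ s, d j ⊗ₜ[k] j = 0 := by
    refine eq_zero_of_pow_eq_zero (n := p) ?_
    rw [sum_pow_char p, Finset.sum_congr rfl fun j _ ↦ hpow j, ← TensorProduct.tmul_sum, hc,
      TensorProduct.tmul_zero]
  have hindep : LinearIndependent K fun j : s ↦ (1 : K) ⊗ₜ[k] (j : ℓ) :=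
    Module.Flat.linearIndependent_one_tmul hs
  have hd_zero := Fintype.linearIndependent_iff.1 hindep (fun j ↦ d j) (by
    simpa [TensorProduct.smul_tmul', Finset.sum_attach s fun j ↦ d j ⊗ₜ[k] j] using hzero)
  intro j hj
  rw [← map_eq_zero (algebraMap k K), ← hd, hd_zero ⟨j, hj⟩, zero_pow hp]

theorem IsSeparableFieldExtension.exists_isTranscendenceBasis [Algebra.EssFiniteType k ℓ]
    (h : IsSeparableFieldExtension k ℓ) :
    ∃ s : Finset ℓ, IsTranscendenceBasis k ((↑) : s → ℓ) ∧
      Algebra.IsSeparable (IntermediateField.adjoin k (s : Set ℓ)) ℓ := by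
  obtain _ | ⟨p, _, _⟩ := CharP.exists' k
  · exact exists_isTranscendenceBasis_and_isSeparable_of_perfectField k ℓ
  · exact exists_isTranscendenceBasis_and_isSeparable_of_linearIndepOn_pow_of_essFiniteType p
      Fact.out fun s hs ↦ h.linearIndepOn_pow p hs

end Separable

section RingHomExt

variable {k ℓ A : Type*} [Field k] [Field ℓ] [Algebra k ℓ] [CommRing A] {s : Set ℓ}
  {f g : ℓ →+* A}

theorem ringHom_eqOn_adjoin
    (hk : f.comp (algebraMap k ℓ) = g.comp (algebraMap k ℓ)) (hs : Set.EqOn f g s) :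
    Set.EqOn f g (IntermediateField.adjoin k s) := by
  intro x hx
  induction hx using IntermediateField.adjoin_induction with
  | mem x hx => exact hs hx
  | algebraMap x => exact RingHom.congr_fun hk x
  | add x y _ _ hx hy => rw [map_add, map_add, hx, hy]
  | inv x _ hx =>
    obtain rfl | hx0 := eq_or_ne x 0
    · rw [inv_zero, map_zero, map_zero]
    · refine left_inv_eq_right_inv (a := f x) ?_ ?_
      · rw [← map_mul, inv_mul_cancel₀ hx0, map_one]
      · rw [hx, ← map_mul, mul_inv_cancel₀ hx0, map_one]
  | mul x y _ _ hx hy => rw [map_mul, map_mul, hx, hy]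

theorem ringHom_ext_of_isSeparable_adjoin
    [Algebra.IsSeparable (IntermediateField.adjoin k s) ℓ] {J : Ideal A} (hJ : J ^ 2 = ⊥)
    (hk : f.comp (algebraMap k ℓ) = g.comp (algebraMap k ℓ)) (hs : Set.EqOn f g s)
    (hfg : ∀ x, f x - g x ∈ J) : f = g := by
  let K := IntermediateField.adjoin k s
  let _ : Algebra K A := (f.comp (algebraMap K ℓ)).toAlgebra
  have := Algebra.FormallyUnramified.of_isSeparable K ℓ
  let F : ℓ →ₐ[K] A := ⟨f, fun _ ↦ rfl⟩
  let G : ℓ →ₐ[K] A := ⟨g, fun r ↦ (ringHom_eqOn_adjoin hk hs r.2).symm⟩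
  have hFG : F = G := Algebra.FormallyUnramified.ext J ⟨2, hJ⟩ fun x ↦ Ideal.Quotient.eq.2 (hfg x)
  exact congrArg (fun H : ℓ →ₐ[K] A ↦ (H : ℓ →+* A)) hFG

end RingHomExt

section Flat

theorem flat_of_injective_field {A K : Type*} [CommRing A] [IsDomain A] [Field K] {f : A →+* K}
    (hf : Function.Injective f) : f.Flat := by
  let _ := f.toAlgebra
  have : FaithfulSMul A K := (faithfulSMul_iff_algebraMap_injective A K).2 hf
  let _ := FractionRing.liftAlgebra A K
  exact Module.Flat.trans A (FractionRing A) K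

theorem flat_aeval_one_tmul {k ℓ ι : Type*} [Field k] [Field ℓ] [Algebra k ℓ] {t : ι → ℓ}
    (ht : AlgebraicIndependent k t) (B : Type*) [CommRing B] [Algebra k B] :
    (MvPolynomial.aeval (R := B) fun i ↦ (1 : B) ⊗ₜ[k] t i).toRingHom.Flat := by
  have hflat : (MvPolynomial.aeval (R := k) t).toRingHom.Flat := flat_of_injective_field ht
  have hcomp : (MvPolynomial.aeval (R := B) fun i ↦ (1 : B) ⊗ₜ[k] t i) =
      (Algebra.TensorProduct.map (AlgHom.id B B) (MvPolynomial.aeval t)).comp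
        (MvPolynomial.algebraTensorAlgEquiv k B).symm.toAlgHom := by
    refine MvPolynomial.algHom_ext fun i ↦ ?_
    simp
  rw [hcomp]
  exact RingHom.Flat.comp (RingHom.Flat.of_bijective (AlgEquiv.bijective _))
    (RingHom.Flat.tensorProductMap (RingHom.Flat.id _) hflat)

end Flat

section GraphIdeal

variable {k ℓ B A : Type*} [Field k] [Field ℓ] [CommRing B] [Algebra k ℓ] [Algebra k B]
  [CommRing A]

/-- The ideal of the graph of the point of `Spec B` given by `h : B → ℓ`, that is the kernel of
`b ⊗ x ↦ h b * x`. -/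
def graphIdeal (h : B →ₐ[k] ℓ) : Ideal (B ⊗[k] ℓ) :=
  RingHom.ker (Algebra.TensorProduct.productMap h (AlgHom.id k ℓ))

theorem mem_graphIdeal {h : B →ₐ[k] ℓ} {z : B ⊗[k] ℓ} :
    z ∈ graphIdeal h ↔ Algebra.TensorProduct.productMap h (AlgHom.id k ℓ) z = 0 := Iff.rfl

instance (h : B →ₐ[k] ℓ) : (graphIdeal h).IsPrime := RingHom.ker_isPrime _

theorem one_tmul_sub_tmul_one_mem_graphIdeal (h : B →ₐ[k] ℓ) (a : B) :
    1 ⊗ₜ h a - a ⊗ₜ 1 ∈ graphIdeal h := by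
  simp [mem_graphIdeal]

theorem graphIdeal_le_ker {h : B →ₐ[k] ℓ} (hh : Function.Surjective h) {s : Set ℓ}
    [Algebra.IsSeparable (IntermediateField.adjoin k s) ℓ] {π : B ⊗[k] ℓ →+* A}
    (hsq : (graphIdeal h).map π ^ 2 = ⊥) (hB : ∀ b, h b = 0 → π (b ⊗ₜ 1) = 0)
    (hs : ∀ x ∈ s, ∃ a, h a = x ∧ π (1 ⊗ₜ x - a ⊗ₜ 1) = 0) :
    graphIdeal h ≤ RingHom.ker π := by
  let β : B →+* A := π.comp (Algebra.TensorProduct.includeLeft (S := k)).toRingHom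
  let f : ℓ →+* A := π.comp (Algebra.TensorProduct.includeRight (R := k) (A := B)).toRingHom
  let g : ℓ →+* A := (h : B →+* ℓ).liftOfSurjective hh ⟨β, hB⟩
  have hg (b : B) : g (h b) = β b := RingHom.liftOfRightInverse_comp_apply _ _ _ _ _
  have hsub (a : B) : f (h a) - g (h a) = π (1 ⊗ₜ h a - a ⊗ₜ 1) := by
    rw [hg, map_sub]
    rfl
  have hfg : f = g := by
    refine ringHom_ext_of_isSeparable_adjoin (k := k) (s := s) hsq ?_ ?_ ?_
    · ext r
      have := hsub (algebraMap k B r)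
      rwa [h.commutes, Algebra.TensorProduct.tmul_one_eq_one_tmul, sub_self, map_zero,
        sub_eq_zero] at this
    · intro x hx
      obtain ⟨a, rfl, ha⟩ := hs x hx
      exact sub_eq_zero.1 ((hsub a).trans ha)
    · intro x
      obtain ⟨a, rfl⟩ := hh x
      exact hsub a ▸ Ideal.mem_map_of_mem π (one_tmul_sub_tmul_one_mem_graphIdeal h a)
  have hπ : π = g.comp (Algebra.TensorProduct.productMap h (AlgHom.id k ℓ) : B ⊗[k] ℓ →+* ℓ) := by
    refine Algebra.TensorProduct.ringHom_ext ?_ ?_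
    · ext b
      simp [hg, β]
    · rw [← hfg]
      ext x
      simp [f]
  intro z hz
  rw [RingHom.mem_ker, hπ, RingHom.comp_apply]
  exact (congrArg g hz).trans (map_zero g)

variable {C : Type*} [CommRing C] [Algebra (B ⊗[k] ℓ) C]

theorem maximalIdeal_le_of_graphIdeal {h : B →ₐ[k] ℓ} (hh : Function.Surjective h) {s : Set ℓ}
    [Algebra.IsSeparable (IntermediateField.adjoin k s) ℓ] [IsLocalRing C] [IsNoetherianRing C]
    (hC : (graphIdeal h).map (algebraMap (B ⊗[k] ℓ) C) = maximalIdeal C) {L : Ideal C}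
    (hB : ∀ b, h b = 0 → algebraMap (B ⊗[k] ℓ) C (b ⊗ₜ 1) ∈ L)
    (hs : ∀ x ∈ s, ∃ a, h a = x ∧ algebraMap (B ⊗[k] ℓ) C (1 ⊗ₜ x - a ⊗ₜ 1) ∈ L) :
    maximalIdeal C ≤ L := by
  refine Submodule.le_of_le_smul_of_le_jacobson_bot (I := maximalIdeal C)
    (IsNoetherian.noetherian _) (IsLocalRing.maximalIdeal_le_jacobson _) ?_
  set N := L ⊔ maximalIdeal C • maximalIdeal C
  let π := (Ideal.Quotient.mk N).comp (algebraMap (B ⊗[k] ℓ) C)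
  have hπ {z : B ⊗[k] ℓ} (hz : algebraMap (B ⊗[k] ℓ) C z ∈ L) : π z = 0 :=
    Ideal.Quotient.eq_zero_iff_mem.2 (Ideal.mem_sup_left hz)
  have hsq : (graphIdeal h).map π ^ 2 = ⊥ := by
    rw [← Ideal.map_map, hC, ← Ideal.map_pow, Ideal.map_eq_bot_iff_le_ker, Ideal.mk_ker, pow_two]
    exact le_sup_right
  have hle : graphIdeal h ≤ RingHom.ker π := graphIdeal_le_ker hh hsq (fun b hb ↦ hπ (hB b hb))
    fun x hx ↦ (hs x hx).imp fun a ha ↦ ⟨ha.1, hπ ha.2⟩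
  rw [← hC, Ideal.map_le_iff_le_comap]
  exact fun z hz ↦ (Ideal.Quotient.eq_zero_iff_mem (I := N)).1 (hle hz)

end GraphIdeal

section Regular

theorem isRegularlyGenerated_ker_comp_eval {B K : Type*} [CommRing B] [IsLocalRing B] [Field K]
    (hB : IsRegularLocal B) {h : B →+* K} (hh : Function.Surjective h) {n : ℕ} (a : Fin n → B) :
    IsRegularlyGenerated (RingHom.ker (h.comp (MvPolynomial.eval a))) := by
  have := hB.1
  have hker : RingHom.ker h = maximalIdeal B :=
    IsLocalRing.eq_maximalIdeal (RingHom.ker_isMaximal_of_surjective h hh)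
  exact .ker_comp (fun x ↦ ⟨MvPolynomial.C x, by simp⟩) (isRegularlyGenerated_ker_eval a)
    (hker ▸ isRegularLocal_iff.1 hB)

variable {k ℓ B : Type u} [Field k] [Field ℓ] [Algebra k ℓ] [CommRing B] [Algebra k B]
  [IsLocalRing B]

theorem isRadical_map_maximalIdeal_includeLeft [IsReduced (ResidueField B ⊗[k] ℓ)] :
    ((maximalIdeal B).map (algebraMap B (B ⊗[k] ℓ))).IsRadical := by
  have hker := Algebra.TensorProduct.rTensor_ker (R := k) (C := ℓ)
    (IsScalarTower.toAlgHom k B (ResidueField B)) IsLocalRing.residue_surjective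
  have hres : RingHom.ker (IsScalarTower.toAlgHom k B (ResidueField B)) = maximalIdeal B :=
    IsLocalRing.ker_residue
  rw [hres] at hker
  have hsurj : Function.Surjective (Algebra.TensorProduct.map
      (IsScalarTower.toAlgHom k B (ResidueField B)) (AlgHom.id k ℓ)) :=
    Algebra.TensorProduct.map_surjective _ _ IsLocalRing.residue_surjective Function.surjective_id
  exact hker ▸ (RingHom.ker_isRadical_iff_reduced_of_surjective hsurj).2 ‹_›

variable [IsNoetherianRing (B ⊗[k] ℓ)]

theorem isRegularLocal_localization_graphIdeal [Algebra.EssFiniteType k ℓ]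
    (hsep : IsSeparableFieldExtension k ℓ) {h : B →ₐ[k] ℓ} (hh : Function.Surjective h)
    (hB : IsRegularLocal B) : IsRegularLocal (Localization.AtPrime (graphIdeal h)) := by
  have := hB.1
  obtain ⟨s, htr, _⟩ := hsep.exists_isTranscendenceBasis
  let C := Localization.AtPrime (graphIdeal h)
  have : IsNoetherianRing C := IsLocalization.isNoetherianRing (graphIdeal h).primeCompl C ‹_›
  let e : Fin s.card ≃ s := s.equivFin.symm
  choose a ha using fun i ↦ hh (e i : ℓ)
  let ψ := MvPolynomial.aeval (R := B) fun i ↦ (1 : B) ⊗ₜ[k] (e i : ℓ)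
  let Φ : MvPolynomial (Fin s.card) B →+* C := (algebraMap _ C).comp ψ.toRingHom
  have hΦ : Φ.Flat := by
    refine RingHom.Flat.comp (flat_aeval_one_tmul (htr.1.comp e e.injective) B) ?_
    exact RingHom.flat_algebraMap_iff.2 (IsLocalization.flat C (graphIdeal h).primeCompl)
  let θ := (h : B →+* ℓ).comp (MvPolynomial.eval a)
  have hψ : (Algebra.TensorProduct.productMap h (AlgHom.id k ℓ) : B ⊗[k] ℓ →+* ℓ).comp
      ψ.toRingHom = θ := by
    refine MvPolynomial.ringHom_ext (fun x ↦ ?_) fun i ↦ ?_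
    · simp [ψ, θ]
    · simp [ψ, θ, ha]
  have hC := IsLocalization.AtPrime.map_eq_maximalIdeal (graphIdeal h) C
  suffices (RingHom.ker θ).map Φ = maximalIdeal C from
    isRegularLocal_iff.2 (this ▸ (isRegularlyGenerated_ker_comp_eval hB hh a).map_of_flat hΦ)
  refine le_antisymm ?_ ?_
  · rw [← hC, ← Ideal.map_map]
    refine Ideal.map_mono (Ideal.map_le_iff_le_comap.2 fun p hp ↦ ?_)
    exact (RingHom.congr_fun hψ p).trans hp
  · refine maximalIdeal_le_of_graphIdeal (s := s) hh hC (fun b hb ↦ ?_) fun x hx ↦ ?_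
    · convert Ideal.mem_map_of_mem Φ (x := MvPolynomial.C b) ?_
      · simp [Φ, ψ]
      · simpa [θ] using hb
    · obtain ⟨i, hi⟩ := e.surjective ⟨x, hx⟩
      obtain rfl : (e i : ℓ) = x := congrArg Subtype.val hi
      refine ⟨a i, ha i, ?_⟩
      convert Ideal.mem_map_of_mem Φ (x := MvPolynomial.X i - MvPolynomial.C (a i)) ?_
      · simp [Φ, ψ]
      · simp [θ]

theorem isRegularLocal_localization_of_mem_minimalPrimes [IsReduced (ResidueField B ⊗[k] ℓ)]
    (hB : IsRegularLocal B) (𝔭 : Ideal (B ⊗[k] ℓ)) [𝔭.IsPrime]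
    (h𝔭 : 𝔭 ∈ ((maximalIdeal B).map (algebraMap B (B ⊗[k] ℓ))).minimalPrimes) :
    IsRegularLocal (Localization.AtPrime 𝔭) := by
  have := hB.1
  let C := Localization.AtPrime 𝔭
  set I := (maximalIdeal B).map (algebraMap B (B ⊗[k] ℓ))
  have : IsNoetherianRing C := IsLocalization.isNoetherianRing 𝔭.primeCompl C ‹_›
  have : Module.Flat B C := Module.Flat.trans B (B ⊗[k] ℓ) C
  have hI : (maximalIdeal B).map (algebraMap B C) = maximalIdeal C := by
    have hradical := IsLocalization.map_radical 𝔭.primeCompl C I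
    rw [isRadical_map_maximalIdeal_includeLeft.radical,
      IsLocalization.AtPrime.radical_map_of_mem_minimalPrimes C (q := 𝔭) I h𝔭,
      IsLocalization.AtPrime.map_eq_maximalIdeal 𝔭 C] at hradical
    rwa [IsScalarTower.algebraMap_eq B (B ⊗[k] ℓ) C, ← Ideal.map_map]
  exact isRegularLocal_iff.2 (hI ▸ (isRegularLocal_iff.1 hB).map)

end Regular

/-! ### Essentially surjective homomorphisms -/

/-- A ring homomorphism is essentially surjective if its target is a localization of its image,
that is, every element of the target is a fraction of elements of the image. -/
def IsEssentiallySurjective {A B : Type*} [CommRing A] [CommRing B] (f : A →+* B) : Prop :=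
  ∀ b, ∃ s a, IsUnit (f s) ∧ f s * b = f a

namespace IsEssentiallySurjective

section

variable {A B C : Type*} [CommRing A] [CommRing B] [CommRing C]

theorem of_surjective {f : A →+* B} (hf : Function.Surjective f) : IsEssentiallySurjective f := by
  intro b
  obtain ⟨a, rfl⟩ := hf b
  exact ⟨1, a, by simp⟩

theorem comp_surjective {g : B →+* C} {f : A →+* B} (hg : IsEssentiallySurjective g)
    (hf : Function.Surjective f) : IsEssentiallySurjective (g.comp f) := by
  intro c
  obtain ⟨s, b, hs, hb⟩ := hg c
  obtain ⟨s, rfl⟩ := hf s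
  obtain ⟨b, rfl⟩ := hf b
  exact ⟨s, b, hs, hb⟩

theorem surjective_of_comp {i : A →+* B} {g : B →+* C} [IsLocalHom g]
    (h : IsEssentiallySurjective (g.comp i)) : Function.Surjective g := by
  intro c
  obtain ⟨s, a, hs, ha⟩ := h c
  obtain ⟨t, ht⟩ := (isUnit_of_map_unit g (i s) hs).exists_right_inv
  refine ⟨t * i a, ?_⟩
  rw [map_mul, ← RingHom.comp_apply, ← ha, RingHom.comp_apply, ← mul_assoc, ← map_mul, mul_comm t,
    ht, map_one, one_mul]

theorem exists_aeval (R S : Type*) [CommRing R] [CommRing S] [Algebra R S]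
    [Algebra.EssFiniteType R S] :
    ∃ (n : ℕ) (x : Fin n → S),
      IsEssentiallySurjective
        (MvPolynomial.aeval x : MvPolynomial (Fin n) R →ₐ[R] S).toRingHom := by
  obtain ⟨t, ht⟩ := (Algebra.essFiniteType_iff R S).1 inferInstance
  let x : Fin t.card → S := Subtype.val ∘ t.equivFin.symm
  have hx : Set.range x = t := by simp [x, Set.range_comp]
  rw [← hx, Algebra.adjoin_range_eq_range_aeval] at ht
  refine ⟨t.card, x, fun b ↦ ?_⟩
  obtain ⟨_, ⟨s, rfl⟩, hs, a, ha⟩ := ht b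
  exact ⟨s, a, hs, (mul_comm _ _).trans ha.symm⟩

theorem lTensor {R A S : Type*} [CommRing R] [CommRing A] [CommRing S] [Algebra R A] [Algebra R S]
    {f : A →ₐ[R] S} (hf : IsEssentiallySurjective f.toRingHom)
    (R' : Type*) [CommRing R'] [Algebra R R'] :
    IsEssentiallySurjective (Algebra.TensorProduct.map (AlgHom.id R' R') f).toRingHom := by
  intro z
  induction z with
  | zero => exact ⟨1, 0, by simp⟩
  | tmul r b =>
    obtain ⟨s, a, hs, ha⟩ := hf b
    refine ⟨1 ⊗ₜ s, r ⊗ₜ a, ?_, ?_⟩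
    · exact hs.map (Algebra.TensorProduct.includeRight : S →ₐ[R] R' ⊗[R] S)
    · exact (Algebra.TensorProduct.tmul_mul_tmul _ _ _ _).trans
        (congrArg₂ (· ⊗ₜ ·) (one_mul r) ha)
  | add z w hz hw =>
    obtain ⟨s, a, hs, ha⟩ := hz
    obtain ⟨t, b, ht, hb⟩ := hw
    refine ⟨s * t, t * a + s * b, ?_, ?_⟩
    · rw [map_mul]
      exact hs.mul ht
    · rw [map_mul, map_add, map_mul, map_mul, ← ha, ← hb]
      ring

end

section Localization

variable {A B : Type*} [CommRing A] [CommRing B] {f : A →+* B} (hf : IsEssentiallySurjective f)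
include hf

theorem isLocalization_map_primeCompl_comap (𝔔 : Ideal B) [𝔔.IsPrime]
    (L : Type*) [CommRing L] [Algebra B L] [IsLocalization.AtPrime L 𝔔] :
    IsLocalization ((𝔔.comap f).primeCompl.map f) L := by
  have hle : (𝔔.comap f).primeCompl.map f ≤ 𝔔.primeCompl := by
    rintro _ ⟨a, ha, rfl⟩
    exact ha
  refine (IsLocalization.iff_of_le_of_exists_dvd _ _ hle fun t ht ↦ ?_).2 ‹_›
  obtain ⟨s, a, hs, ha⟩ := hf t
  refine ⟨f a, ⟨a, ?_, rfl⟩, f s, (ha.symm.trans (mul_comm _ _))⟩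
  change f a ∉ 𝔔
  rwa [← ha, Ideal.unit_mul_mem_iff_mem _ hs]

theorem algebraMap_comp (M : Submonoid B) {L : Type*} [CommRing L] [Algebra B L]
    [IsLocalization M L] : IsEssentiallySurjective ((algebraMap B L).comp f) := by
  intro z
  obtain ⟨⟨b, t⟩, hbt⟩ := IsLocalization.surj M z
  obtain ⟨s, a, hs, ha⟩ := hf b
  obtain ⟨s', a', hs', ha'⟩ := hf t
  refine ⟨s * a', s' * a, ?_, ?_⟩
  · rw [map_mul]
    refine (hs.map (algebraMap B L)).mul ?_
    rw [RingHom.comp_apply, ← ha', map_mul]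
    exact (hs'.map (algebraMap B L)).mul (IsLocalization.map_units L t)
  · simp only [RingHom.comp_apply, map_mul, ← ha, ← ha', ← hbt]
    ring

variable (𝔔 : Ideal B) [𝔔.IsPrime]

theorem localRingHom_surjective :
    Function.Surjective (Localization.localRingHom (𝔔.comap f) 𝔔 f rfl) := by
  refine surjective_of_comp (i := algebraMap A _) ?_
  rw [show (Localization.localRingHom (𝔔.comap f) 𝔔 f rfl).comp (algebraMap A _) =
    (algebraMap B _).comp f from IsLocalization.map_comp _]
  exact hf.algebraMap_comp 𝔔.primeCompl

theorem ker_localRingHom :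
    RingHom.ker (Localization.localRingHom (𝔔.comap f) 𝔔 f rfl) =
      (RingHom.ker f).map (algebraMap A (Localization.AtPrime (𝔔.comap f))) := by
  have := hf.isLocalization_map_primeCompl_comap 𝔔 (Localization.AtPrime 𝔔)
  exact IsLocalization.ker_map (Localization.AtPrime 𝔔) f rfl

end Localization

end IsEssentiallySurjective

section BaseChange

variable {R A S : Type*} [CommRing R] [CommRing A] [CommRing S] [Algebra R A] [Algebra R S]
  (R' : Type*) [CommRing R'] [Algebra R R']

theorem ker_lTensor_of_flat [Module.Flat R R'] (f : A →ₐ[R] S) :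
    RingHom.ker (Algebra.TensorProduct.map (AlgHom.id R' R') f) =
      (RingHom.ker f).map (Algebra.TensorProduct.includeRight : A →ₐ[R] R' ⊗[R] A) := by
  rw [← Submodule.restrictScalars_inj R, Ideal.map_includeRight_eq]
  exact (Module.Flat.lTensor_exact R' f.toLinearMap.exact_subtype_ker_map).linearMap_ker_eq

variable (R A) in
theorem flat_includeRight [Module.Flat R R'] :
    (Algebra.TensorProduct.includeRight : A →ₐ[R] R' ⊗[R] A).toRingHom.Flat := by
  have hflat : (algebraMap A (A ⊗[R] R')).Flat := by
    rw [RingHom.flat_algebraMap_iff]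
    infer_instance
  exact hflat.comp (.of_bijective (Algebra.TensorProduct.comm R A R').bijective)

variable {n : ℕ} (x : Fin n → S)

/-- The polynomial presentation `R'[X] → R' ⊗ S`, `Xᵢ ↦ 1 ⊗ xᵢ`, obtained by base change from
`R[X] → S`, `Xᵢ ↦ xᵢ`. -/
noncomputable def aevalBaseChange : MvPolynomial (Fin n) R' →+* R' ⊗[R] S :=
  (Algebra.TensorProduct.map (AlgHom.id R' R')
    (MvPolynomial.aeval x : MvPolynomial (Fin n) R →ₐ[R] S)).toRingHom.comp
    (MvPolynomial.algebraTensorAlgEquiv R R').symm.toRingEquiv.toRingHom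

theorem aevalBaseChange_map (p : MvPolynomial (Fin n) R) :
    aevalBaseChange R' x (MvPolynomial.map (algebraMap R R') p) =
      1 ⊗ₜ[R] MvPolynomial.aeval x p := by
  simp [aevalBaseChange, MvPolynomial.algebraTensorAlgEquiv_symm_map]

theorem aevalBaseChange_comp_C :
    (aevalBaseChange (R := R) R' x).comp MvPolynomial.C = algebraMap R' (R' ⊗[R] S) :=
  ((Algebra.TensorProduct.map (AlgHom.id R' R')
    (MvPolynomial.aeval x : MvPolynomial (Fin n) R →ₐ[R] S)).comp
    (MvPolynomial.algebraTensorAlgEquiv R R').symm.toAlgHom).comp_algebraMap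

theorem IsEssentiallySurjective.aevalBaseChange {x : Fin n → S}
    (hx : IsEssentiallySurjective
      (MvPolynomial.aeval x : MvPolynomial (Fin n) R →ₐ[R] S).toRingHom) :
    IsEssentiallySurjective (aevalBaseChange (R := R) R' x) :=
  (hx.lTensor R').comp_surjective (MvPolynomial.algebraTensorAlgEquiv R R').symm.surjective

theorem algebraTensorAlgEquiv_comp_includeRight :
    (MvPolynomial.algebraTensorAlgEquiv (σ := Fin n) R R').toRingEquiv.toRingHom.comp
      (Algebra.TensorProduct.includeRight : _ →ₐ[R] R' ⊗[R] MvPolynomial (Fin n) R).toRingHom =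
      MvPolynomial.map (algebraMap R R') := by
  ext <;> simp

theorem ker_aevalBaseChange [Module.Flat R R'] :
    RingHom.ker (aevalBaseChange (R := R) R' x) =
      (RingHom.ker (MvPolynomial.aeval x : MvPolynomial (Fin n) R →ₐ[R] S)).map
        (MvPolynomial.map (algebraMap R R')) := by
  let e := (MvPolynomial.algebraTensorAlgEquiv (σ := Fin n) R R').toRingEquiv
  calc RingHom.ker (aevalBaseChange (R := R) R' x)
      = (RingHom.ker (Algebra.TensorProduct.map (AlgHom.id R' R')
          (MvPolynomial.aeval x : MvPolynomial (Fin n) R →ₐ[R] S))).comap e.symm :=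
        (RingHom.comap_ker _ _).symm
    _ = _ := by
        rw [Ideal.comap_symm, ker_lTensor_of_flat, ← algebraTensorAlgEquiv_comp_includeRight,
          ← Ideal.map_map]
        rfl

theorem flat_mvPolynomial_map [Module.Flat R R'] :
    (MvPolynomial.map (σ := Fin n) (algebraMap R R')).Flat := by
  rw [← algebraTensorAlgEquiv_comp_includeRight]
  exact (flat_includeRight R _ R').comp (.of_bijective (RingEquiv.bijective _))

end BaseChange

/-! ### The closed fibre of a base change -/

theorem isWeaklyRegularHom_algebraMap_iff {A B : Type u} [CommRing A] [CommRing B] [IsLocalRing A]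
    [Algebra A B] :
    IsWeaklyRegularHom A B (algebraMap A B) ↔
      IsLocalHom (algebraMap A B) ∧ Module.Flat A B ∧
        IsRegularLocal (B ⧸ (maximalIdeal A).map (algebraMap A B)) := by
  rw [← RingHom.flat_algebraMap_iff]
  rfl

section ClosedFibre

attribute [local instance] Algebra.TensorProduct.rightAlgebra

variable (R S R' : Type u) [CommRing R] [IsLocalRing R] [CommRing S] [IsLocalRing S] [CommRing R']
  [Algebra R S] [Algebra R R'] [IsLocalHom (algebraMap R S)]

/-- The closed fibre `R' / m R'` of an algebra `R'` over the local ring `(R, m)`. -/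
abbrev ClosedFibre : Type u := R' ⧸ (maximalIdeal R).map (algebraMap R R')

noncomputable instance : Algebra (ResidueField R) (ClosedFibre R R') :=
  inferInstanceAs (Algebra (R ⧸ maximalIdeal R) (R' ⧸ (maximalIdeal R).map (algebraMap R R')))

instance : IsScalarTower R (ResidueField R) (ClosedFibre R R') :=
  inferInstanceAs (IsScalarTower R (R ⧸ maximalIdeal R) (ClosedFibre R R'))

/-- The reduction `R' ⊗_R S → (R' / m R') ⊗_k ℓ`, where `k` and `ℓ` are the residue fields of
`R` and `S`. -/
noncomputable def fibreMap :
    R' ⊗[R] S →+* ClosedFibre R R' ⊗[ResidueField R] ResidueField S :=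
  haveI := CompatibleSMul.of_algebraMap_surjective (A := ResidueField R) (ClosedFibre R R')
    (ResidueField S) (residue_surjective (R := R))
  (Algebra.TensorProduct.equivOfCompatibleSMul R (ResidueField R) R (ClosedFibre R R')
    (ResidueField S)).symm.toRingEquiv.toRingHom.comp
  (Algebra.TensorProduct.map (Ideal.Quotient.mkₐ R ((maximalIdeal R).map (algebraMap R R')))
    (IsScalarTower.toAlgHom R S (ResidueField S))).toRingHom

@[simp]
theorem fibreMap_tmul (r : R') (s : S) :
    fibreMap R S R' (r ⊗ₜ s) = Ideal.Quotient.mk _ r ⊗ₜ residue S s :=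
  rfl

theorem fibreMap_surjective : Function.Surjective (fibreMap R S R') := by
  rw [fibreMap, RingHom.coe_comp]
  exact (RingEquiv.surjective _).comp (Algebra.TensorProduct.map_surjective
    (Ideal.Quotient.mkₐ R ((maximalIdeal R).map (algebraMap R R')))
    (IsScalarTower.toAlgHom R S (ResidueField S)) Ideal.Quotient.mk_surjective residue_surjective)

theorem ker_fibreMap :
    RingHom.ker (fibreMap R S R') = (maximalIdeal S).map (algebraMap S (R' ⊗[R] S)) := by
  let π := Ideal.Quotient.mkₐ R ((maximalIdeal R).map (algebraMap R R'))
  let τ := IsScalarTower.toAlgHom R S (ResidueField S)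
  have hπ : RingHom.ker π = (maximalIdeal R).map (algebraMap R R') := Ideal.Quotient.mkₐ_ker R _
  have hτ : RingHom.ker τ = maximalIdeal S := ker_residue
  have hker : RingHom.ker (fibreMap R S R') = RingHom.ker (Algebra.TensorProduct.map π τ) := by
    ext z
    simp [fibreMap, RingHom.mem_ker, π, τ]
  have hle : ((maximalIdeal R).map (algebraMap R R')).map (algebraMap R' (R' ⊗[R] S)) ≤
      (maximalIdeal S).map (algebraMap S (R' ⊗[R] S)) := by
    rw [Ideal.map_map, ← IsScalarTower.algebraMap_eq, IsScalarTower.algebraMap_eq R S,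
      ← Ideal.map_map]
    exact Ideal.map_mono (map_maximalIdeal_le R S)
  rw [hker, Algebra.TensorProduct.map_ker _ _ Ideal.Quotient.mk_surjective residue_surjective,
    hπ, hτ]
  exact sup_eq_right.2 hle

variable (𝔭 : Ideal (ClosedFibre R R' ⊗[ResidueField R] ResidueField S)) [𝔭.IsPrime]

/-- The localization of `R' ⊗_R S` at the preimage of a prime ideal of `(R' / m R') ⊗_k ℓ`. -/
abbrev FibreLocalization : Type u := Localization.AtPrime (𝔭.comap (fibreMap R S R'))

theorem comap_algebraMap_comap_fibreMap :
    (𝔭.comap (fibreMap R S R')).comap (algebraMap S (R' ⊗[R] S)) = maximalIdeal S := by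
  refine ((maximalIdeal.isMaximal S).eq_of_le (Ideal.IsPrime.ne_top inferInstance) ?_).symm
  rw [← Ideal.map_le_iff_le_comap, ← ker_fibreMap]
  exact Ideal.ker_le_comap _

instance isLocalHom_algebraMap_fibreLocalization :
    IsLocalHom (algebraMap S (FibreLocalization R S R' 𝔭)) := by
  refine ((local_hom_TFAE _).out 0 4).2 ?_
  rw [IsScalarTower.algebraMap_eq S (R' ⊗[R] S), ← Ideal.comap_comap,
    ← comap_algebraMap_comap_fibreMap R S R' 𝔭]
  congr 1
  exact IsLocalization.AtPrime.under_maximalIdeal _ _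

instance flat_fibreLocalization [Module.Flat R R'] :
    Module.Flat S (FibreLocalization R S R' 𝔭) := by
  have : Module.Flat S (R' ⊗[R] S) := by
    rw [← RingHom.flat_algebraMap_iff]
    exact flat_includeRight R S R'
  have := IsLocalization.flat (FibreLocalization R S R' 𝔭) (𝔭.comap (fibreMap R S R')).primeCompl
  exact Module.Flat.trans S (R' ⊗[R] S) _

theorem isRegularLocal_closedFibre_fibreLocalization
    (h : IsRegularLocal (Localization.AtPrime 𝔭)) :
    IsRegularLocal (ClosedFibre S (FibreLocalization R S R' 𝔭)) := by
  have hes := IsEssentiallySurjective.of_surjective (fibreMap_surjective R S R')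
  refine h.of_ringEquiv (RingEquiv.symm ((Ideal.quotEquivOfEq ?_).trans
    (RingHom.quotientKerEquivOfSurjective (hes.localRingHom_surjective 𝔭))))
  rw [hes.ker_localRingHom, ker_fibreMap, Ideal.map_map, ← IsScalarTower.algebraMap_eq]

theorem isWeaklyRegularHom_fibreLocalization [Module.Flat R R']
    (h : IsRegularLocal (Localization.AtPrime 𝔭)) :
    IsWeaklyRegularHom S (FibreLocalization R S R' 𝔭) (algebraMap S _) :=
  isWeaklyRegularHom_algebraMap_iff.2 ⟨inferInstance, inferInstance,
    isRegularLocal_closedFibre_fibreLocalization R S R' 𝔭 h⟩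

end ClosedFibre

/-! ### Comparing the kernels of presentations -/

section Presentation

variable {R S : Type u} [CommRing R] [CommRing S] [IsLocalRing S] [Algebra R S] {n : ℕ}
  (x : Fin n → S)

variable (R) in
/-- The prime ideal `q` of `R[X]` for which a presentation `R[X] → S`, `Xᵢ ↦ xᵢ`, factors
through a local homomorphism `R[X]_q → S`. -/
noncomputable abbrev presentationPrime : Ideal (MvPolynomial (Fin n) R) :=
  (maximalIdeal S).comap (MvPolynomial.aeval x : MvPolynomial (Fin n) R →ₐ[R] S).toRingHom

variable (R) in
/-- The kernel of the local presentation `R[X]_q → S`. -/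
noncomputable abbrev presentationKernel : Ideal (Localization.AtPrime (presentationPrime R x)) :=
  (RingHom.ker (MvPolynomial.aeval x : MvPolynomial (Fin n) R →ₐ[R] S)).map (algebraMap _ _)

theorem presentationKernel_ne_top : presentationKernel R x ≠ ⊤ := by
  refine ne_top_of_le_ne_top (maximalIdeal.isMaximal _).ne_top (Ideal.map_le_iff_le_comap.2 ?_)
  exact (Ideal.ker_le_comap
    (MvPolynomial.aeval x : MvPolynomial (Fin n) R →ₐ[R] S).toRingHom).trans
      (IsLocalization.AtPrime.under_maximalIdeal _ (presentationPrime R x)).ge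

section Fibre

attribute [local instance] Algebra.TensorProduct.rightAlgebra

variable {R' : Type u} [IsLocalRing R] [CommRing R'] [Algebra R R'] [IsLocalHom (algebraMap R S)]
  (𝔭 : Ideal (ClosedFibre R R' ⊗[ResidueField R] ResidueField S)) [𝔭.IsPrime]

/-- The preimage in `R'[X]` of a prime ideal of `(R' / m R') ⊗_k ℓ`. -/
noncomputable abbrev fibrePresentationPrime : Ideal (MvPolynomial (Fin n) R') :=
  (𝔭.comap (fibreMap R S R')).comap (aevalBaseChange R' x)

/-- The localization of the base-changed presentation `R'[X] → R' ⊗_R S` at a prime ideal of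
`(R' / m R') ⊗_k ℓ`. -/
noncomputable abbrev fibrePresentation :
    Localization.AtPrime (fibrePresentationPrime x 𝔭) →+* FibreLocalization R S R' 𝔭 :=
  Localization.localRingHom _ (𝔭.comap (fibreMap R S R')) (aevalBaseChange R' x) rfl

theorem presentationPrime_eq_comap :
    presentationPrime R x =
      (fibrePresentationPrime x 𝔭).comap (MvPolynomial.map (algebraMap R R')) := by
  have hcomp : (aevalBaseChange R' x).comp (MvPolynomial.map (algebraMap R R')) =
      (algebraMap S (R' ⊗[R] S)).comp
        (MvPolynomial.aeval x : MvPolynomial (Fin n) R →ₐ[R] S).toRingHom :=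
    RingHom.ext (aevalBaseChange_map R' x)
  rw [fibrePresentationPrime, Ideal.comap_comap _ (aevalBaseChange R' x), hcomp,
    ← Ideal.comap_comap, comap_algebraMap_comap_fibreMap]

variable {x}

theorem ker_fibrePresentation [Module.Flat R R']
    (hx : IsEssentiallySurjective
      (MvPolynomial.aeval x : MvPolynomial (Fin n) R →ₐ[R] S).toRingHom) :
    RingHom.ker (fibrePresentation x 𝔭) =
      (presentationKernel R x).map (Localization.localRingHom _ (fibrePresentationPrime x 𝔭)
        (MvPolynomial.map (algebraMap R R')) (presentationPrime_eq_comap x 𝔭)) := by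
  rw [(hx.aevalBaseChange R').ker_localRingHom, ker_aevalBaseChange, Ideal.map_map, Ideal.map_map]
  congr 1
  exact (IsLocalization.map_comp _).symm

theorem isRegularlyGenerated_ker_fibrePresentation_iff [IsNoetherianRing R'] [Module.Flat R R']
    (hx : IsEssentiallySurjective
      (MvPolynomial.aeval x : MvPolynomial (Fin n) R →ₐ[R] S).toRingHom) :
    IsRegularlyGenerated (RingHom.ker (fibrePresentation x 𝔭)) ↔
      IsRegularlyGenerated (presentationKernel R x) := by
  let q' := fibrePresentationPrime x 𝔭
  let γ : Localization.AtPrime (presentationPrime R x) →+* Localization.AtPrime q' :=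
    Localization.localRingHom _ q' (MvPolynomial.map (algebraMap R R'))
      (presentationPrime_eq_comap x 𝔭)
  let _ : Algebra (Localization.AtPrime (presentationPrime R x)) (Localization.AtPrime q') :=
    γ.toAlgebra
  have : Module.Flat (Localization.AtPrime (presentationPrime R x)) (Localization.AtPrime q') :=
    (flat_mvPolynomial_map R').localRingHom q' _ (presentationPrime_eq_comap x 𝔭)
  have : IsLocalHom (algebraMap (Localization.AtPrime (presentationPrime R x))
    (Localization.AtPrime q')) := Localization.isLocalHom_localRingHom _ q' _ _
  have := Module.FaithfullyFlat.of_flat_of_isLocalHom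
    (A := Localization.AtPrime (presentationPrime R x)) (B := Localization.AtPrime q')
  have : IsNoetherianRing (Localization.AtPrime q') :=
    IsLocalization.isNoetherianRing q'.primeCompl _ inferInstance
  rw [ker_fibrePresentation 𝔭 hx]
  exact ⟨fun h ↦ h.of_map (presentationKernel_ne_top x), fun h ↦ h.map⟩

end Fibre

end Presentation

/-! ### Regularity of a complete intersection presentation -/

theorem isRegularlyGenerated_ker_of_comp_C {A V : Type*} [CommRing A] [CommRing V] {n : ℕ}
    {f : MvPolynomial (Fin n) A →+* V} (hf : Function.Surjective (f.comp MvPolynomial.C))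
    (hker : IsRegularlyGenerated (RingHom.ker (f.comp MvPolynomial.C))) :
    IsRegularlyGenerated (RingHom.ker f) := by
  choose a ha using fun i ↦ hf (f (MvPolynomial.X i))
  have hcomp : f = (f.comp MvPolynomial.C).comp (MvPolynomial.eval a) :=
    MvPolynomial.ringHom_ext (by simp) fun i ↦ by simp [← ha]
  rw [hcomp]
  exact .ker_comp (fun x ↦ ⟨MvPolynomial.C x, by simp⟩) (isRegularlyGenerated_ker_eval a) hker

theorem IsRegularlyGenerated.ker_of_comp_algebraMap {A L V : Type*} [CommRing A] [CommRing L]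
    [CommRing V] [Algebra A L] (W : Submonoid A) [IsLocalization W L] {f : L →+* V}
    (h : IsRegularlyGenerated (RingHom.ker (f.comp (algebraMap A L)))) :
    IsRegularlyGenerated (RingHom.ker f) := by
  have := IsLocalization.flat L W
  rw [← IsLocalization.map_under W L (RingHom.ker f), Ideal.under, RingHom.comap_ker]
  exact h.map

theorem surjective_of_algHom_residueField {S V : Type*} [CommRing S] [IsLocalRing S] [CommRing V]
    [Algebra S V] (θ : V →ₐ[S] ResidueField S) : Function.Surjective θ := by
  intro y
  obtain ⟨s, rfl⟩ := residue_surjective y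
  exact ⟨algebraMap S V s, θ.commutes s⟩

section BaseChangeLift

attribute [local instance] Algebra.TensorProduct.rightAlgebra

variable {R S R' V : Type*} [CommRing R] [CommRing S] [CommRing R'] [CommRing V] [Algebra R S]
  [Algebra R R'] [Algebra R V] [Algebra S V] [IsScalarTower R S V] (g : R' →ₐ[R] V)

/-- The homomorphism `R' ⊗_R S → V` of `S`-algebras induced by `g : R' → V`. -/
noncomputable def baseChangeLift : R' ⊗[R] S →ₐ[S] V where
  __ := Algebra.TensorProduct.productMap g (IsScalarTower.toAlgHom R S V)
  commutes' s := by simp [Algebra.TensorProduct.right_algebraMap_apply]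

theorem baseChangeLift_tmul (r : R') (s : S) :
    baseChangeLift g (r ⊗ₜ s) = g r * algebraMap S V s :=
  rfl

theorem baseChangeLift_comp_aevalBaseChange_comp_C {n : ℕ} (x : Fin n → S) :
    ((baseChangeLift (S := S) g).toRingHom.comp (aevalBaseChange R' x)).comp MvPolynomial.C =
      g.toRingHom := by
  rw [RingHom.comp_assoc, aevalBaseChange_comp_C]
  ext r
  exact (baseChangeLift_tmul g r (1 : S)).trans (by simp)

end BaseChangeLift

section Completion

attribute [local instance] Algebra.TensorProduct.rightAlgebra

variable {R S R' : Type u} [CommRing R] [IsLocalRing R] [CommRing S] [IsLocalRing S] [CommRing R']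
  [Algebra R S] [Algebra R R'] [IsLocalHom (algebraMap R S)]

/-- The homomorphism `R' / m R' → ℓ` of `k`-algebras induced by `τ : R' → ℓ`. -/
noncomputable def fibreAugmentation (τ : R' →ₐ[R] ResidueField S) :
    ClosedFibre R R' →ₐ[ResidueField R] ResidueField S :=
  (Ideal.Quotient.liftₐ ((maximalIdeal R).map (algebraMap R R')) τ fun r hr ↦ by
    suffices (maximalIdeal R).map (algebraMap R R') ≤ RingHom.ker τ from this hr
    refine Ideal.map_le_iff_le_comap.2 fun r hr ↦ ?_
    rw [Ideal.mem_comap, RingHom.mem_ker, AlgHom.commutes, IsScalarTower.algebraMap_apply R S]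
    exact (residue_eq_zero_iff _).2 (map_maximalIdeal_le R S
      (Ideal.mem_map_of_mem _ hr))).extendScalarsOfSurjective residue_surjective

theorem fibreAugmentation_surjective {τ : R' →ₐ[R] ResidueField S} (hτ : Function.Surjective τ) :
    Function.Surjective (fibreAugmentation τ) :=
  Ideal.Quotient.lift_surjective_of_surjective _ _ hτ

variable {V : Type u} [CommRing V] [IsLocalRing V] [Algebra R V] [Algebra S V] [IsScalarTower R S V]
  (g : R' →ₐ[R] V) (θ : V →ₐ[S] ResidueField S)

/-- The point of the closed fibre of `S → R' ⊗_R S` cut out by `g : R' → V`, where `θ` identifies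
`ℓ` with the residue field of `V`. -/
noncomputable abbrev fibrePoint :
    Ideal (ClosedFibre R R' ⊗[ResidueField R] ResidueField S) :=
  graphIdeal (fibreAugmentation ((θ.restrictScalars R).comp g))

theorem comap_fibrePoint :
    (fibrePoint g θ).comap (fibreMap R S R') = (maximalIdeal V).comap (baseChangeLift g) := by
  have hθ : RingHom.ker (θ : V →+* ResidueField S) = maximalIdeal V :=
    eq_maximalIdeal (RingHom.ker_isMaximal_of_surjective _ (surjective_of_algHom_residueField θ))
  have hcomp : ∀ z, Algebra.TensorProduct.productMap
      (fibreAugmentation ((θ.restrictScalars R).comp g)) (AlgHom.id _ _) (fibreMap R S R' z) =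
        θ (baseChangeLift g z) := by
    intro z
    induction z with
    | zero => simp
    | tmul r s =>
      rw [fibreMap_tmul, baseChangeLift_tmul, map_mul, θ.commutes]
      rfl
    | add z w hz hw => simp only [map_add, hz, hw]
  ext z
  rw [Ideal.mem_comap, mem_graphIdeal, hcomp, ← hθ]
  rfl

/-- The homomorphism of `S`-algebras from the localization of `R' ⊗_R S` at the point defined by
`g` to `V`. -/
noncomputable def fibreLocalizationLift :
    FibreLocalization R S R' (fibrePoint g θ) →ₐ[S] V :=
  IsLocalization.liftAlgHom (M := ((fibrePoint g θ).comap (fibreMap R S R')).primeCompl)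
    (f := baseChangeLift g) fun y ↦ by
      have hy : (y : R' ⊗[R] S) ∉ (maximalIdeal V).comap (baseChangeLift g) :=
        comap_fibrePoint g θ ▸ y.2
      simpa using hy

theorem fibreLocalizationLift_comp_algebraMap :
    ((fibreLocalizationLift g θ).toRingHom.comp (algebraMap (R' ⊗[R] S) _)) =
      (baseChangeLift (S := S) g).toRingHom :=
  IsLocalization.lift_comp _

theorem fibreLocalizationLift_comp_fibrePresentation {n : ℕ} (x : Fin n → S) :
    ((fibreLocalizationLift g θ).toRingHom.comp (fibrePresentation x (fibrePoint g θ))).comp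
      (algebraMap (MvPolynomial (Fin n) R') _) =
        (baseChangeLift (S := S) g).toRingHom.comp (aevalBaseChange R' x) := by
  have hcomp : (fibrePresentation x (fibrePoint g θ)).comp (algebraMap _ _) =
      (algebraMap _ _).comp (aevalBaseChange R' x) :=
    IsLocalization.map_comp _
  rw [RingHom.comp_assoc, hcomp, ← RingHom.comp_assoc, fibreLocalizationLift_comp_algebraMap]

variable {g}

theorem isRegularlyGenerated_ker_fibreLocalizationLift_comp (hg : Function.Surjective g)
    (hker : IsRegularlyGenerated (RingHom.ker g)) {n : ℕ} (x : Fin n → S) :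
    IsRegularlyGenerated (RingHom.ker
      ((fibreLocalizationLift g θ).toRingHom.comp (fibrePresentation x (fibrePoint g θ)))) := by
  refine .ker_of_comp_algebraMap (fibrePresentationPrime x (fibrePoint g θ)).primeCompl ?_
  rw [fibreLocalizationLift_comp_fibrePresentation]
  refine isRegularlyGenerated_ker_of_comp_C ?_ ?_ <;>
    rw [baseChangeLift_comp_aevalBaseChange_comp_C]
  exacts [hg, hker]

theorem fibreLocalizationLift_surjective (hg : Function.Surjective g) :
    Function.Surjective (fibreLocalizationLift g θ) := by
  intro v
  obtain ⟨r, rfl⟩ := hg v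
  refine ⟨algebraMap (R' ⊗[R] S) _ (r ⊗ₜ 1), ?_⟩
  exact (RingHom.congr_fun (fibreLocalizationLift_comp_algebraMap g θ) _).trans
    ((baseChangeLift_tmul g r (1 : S)).trans (by simp))

theorem isRegularlyGenerated_presentationKernel_of_factorization [IsNoetherianRing R']
    [Module.Flat R R'] [Module.Flat S V] [Algebra.EssFiniteType (ResidueField R) (ResidueField S)]
    (hsep : IsSeparableFieldExtension (ResidueField R) (ResidueField S))
    (hfibre : IsRegularLocal (ClosedFibre R R'))
    (hV : maximalIdeal V = (maximalIdeal S).map (algebraMap S V)) (θ : V →ₐ[S] ResidueField S)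
    (hg : Function.Surjective g) (hker : IsRegularlyGenerated (RingHom.ker g)) {n : ℕ}
    {x : Fin n → S} (hx : IsEssentiallySurjective
      (MvPolynomial.aeval x : MvPolynomial (Fin n) R →ₐ[R] S).toRingHom) :
    IsRegularlyGenerated (presentationKernel R x) := by
  let 𝔭 := fibrePoint g θ
  have := hfibre.1
  obtain ⟨_, -⟩ := hfibre.2
  have : IsNoetherianRing (Localization.AtPrime (fibrePresentationPrime x 𝔭)) :=
    IsLocalization.isNoetherianRing (fibrePresentationPrime x 𝔭).primeCompl _ inferInstance
  have hT := (hx.aevalBaseChange R').localRingHom_surjective (𝔭.comap (fibreMap R S R'))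
  have : IsNoetherianRing (FibreLocalization R S R' 𝔭) :=
    isNoetherianRing_of_surjective _ _ (fibrePresentation x 𝔭) hT
  have : IsNoetherianRing (ClosedFibre R R' ⊗[ResidueField R] ResidueField S) :=
    Algebra.EssFiniteType.isNoetherianRing (ClosedFibre R R') _
  have hregular : IsRegularLocal (Localization.AtPrime 𝔭) :=
    isRegularLocal_localization_graphIdeal hsep (fibreAugmentation_surjective
      ((surjective_of_algHom_residueField θ).comp hg)) hfibre
  have hlift : IsRegularlyGenerated (RingHom.ker (fibreLocalizationLift g θ)) :=
    isRegularlyGenerated_ker_of_isRegularLocal_closedFibre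
      (isRegularLocal_closedFibre_fibreLocalization R S R' 𝔭 hregular) hV
      (fibreLocalizationLift_surjective θ hg)
  rw [← isRegularlyGenerated_ker_fibrePresentation_iff 𝔭 hx]
  exact .of_ker_comp hT (isRegularlyGenerated_ker_fibreLocalizationLift_comp θ hg hker x) hlift

end Completion

theorem algebra_residueField_eq_toAlgebra (R S : Type*) [CommRing R] [CommRing S] [IsLocalRing R]
    [IsLocalRing S] [Algebra R S] [IsLocalHom (algebraMap R S)] :
    (inferInstance : Algebra (ResidueField R) (ResidueField S)) =
      (ResidueField.map (algebraMap R S)).toAlgebra := by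
  refine Algebra.algebra_ext _ _ fun r ↦ ?_
  obtain ⟨r, rfl⟩ := residue_surjective r
  rfl

theorem essFiniteType_residueField (R S : Type*) [CommRing R] [CommRing S] [IsLocalRing R]
    [IsLocalRing S] [Algebra R S] [IsLocalHom (algebraMap R S)] [Algebra.EssFiniteType R S] :
    Algebra.EssFiniteType (ResidueField R) (ResidueField S) := by
  have : Algebra.FiniteType S (ResidueField S) :=
    .of_surjective (Algebra.ofId S (ResidueField S)) residue_surjective
  have := Algebra.EssFiniteType.comp R S (ResidueField S)
  exact .of_comp R _ _

theorem IsCIAt.isRegularlyGenerated_presentationKernel {R S : Type u} [CommRing R] [IsLocalRing R]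
    [CommRing S] [IsLocalRing S] [IsNoetherianRing S] [Algebra R S] [IsLocalHom (algebraMap R S)]
    [Algebra.EssFiniteType R S] (hci : IsCIAt R S (algebraMap R S) (maximalIdeal S))
    (hsep : IsSeparableFieldExtension (ResidueField R) (ResidueField S)) {n : ℕ} {x : Fin n → S}
    (hx : IsEssentiallySurjective
      (MvPolynomial.aeval x : MvPolynomial (Fin n) R →ₐ[R] S).toRingHom) :
    IsRegularlyGenerated (presentationKernel R x) := by
  obtain ⟨R'', _, f, g, ⟨hcomp, _, -, hf, hg, -⟩, hker⟩ := hci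
  algebraize [f]
  obtain ⟨-, _, hfibre⟩ := isWeaklyRegularHom_algebraMap_iff.1 hf
  have := essFiniteType_residueField R S
  have : Module.Flat S (AdicCompletion (maximalIdeal S) S) := AdicCompletion.flat_of_isNoetherian _
  let gR : R'' →ₐ[R] AdicCompletion (maximalIdeal S) S :=
    { g with commutes' := RingHom.congr_fun hcomp }
  exact isRegularlyGenerated_presentationKernel_of_factorization (g := gR) hsep hfibre
    AdicCompletion.maximalIdeal_eq_map (AdicCompletion.evalOneₐ (maximalIdeal S)) hg
    (generatedByRegularSequence_iff.1 hker).1 hx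

/-! ### Ascent along the base change of a quasi-deformation -/

theorem flatDimFinite_compHom_iff {Q A N : Type u} [CommRing Q] [CommRing A] [Algebra Q A]
    [AddCommGroup N] [Module A N] [h : Module Q N] [IsScalarTower Q A N] :
    @FlatDimFinite Q _ N _ (Module.compHom N (algebraMap Q A)) ↔ FlatDimFinite Q N := by
  suffices Module.compHom N (algebraMap Q A) = h by rw [this]
  exact Module.ext' _ _ fun q y ↦ algebraMap_smul A q y

theorem HasFiniteUpperCIDim.of_algebra {S S' Q M : Type u} [CommRing S] [IsLocalRing S]
    [CommRing S'] [IsLocalRing S'] [CommRing Q] [IsLocalRing Q] [IsNoetherianRing Q]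
    [hS : Algebra S S'] [hQ : Algebra Q S'] [AddCommGroup M] [Module S M]
    (hS' : IsWeaklyRegularHom S S' (algebraMap S S'))
    (hsurj : Function.Surjective (algebraMap Q S'))
    (hker : IsRegularlyGenerated (RingHom.ker (algebraMap Q S')))
    (hfd : FlatDimFinite Q (S' ⊗[S] M)) : HasFiniteUpperCIDim S M := by
  have hgen := generatedByRegularSequence_iff.2 ⟨hker, RingHom.ker_ne_top (algebraMap Q S')⟩
  have hpd := ProjDimFinite.of_generatedByRegularSequence hsurj hgen
  rw [← flatDimFinite_compHom_iff (A := S')] at hfd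
  obtain ⟨f, rfl⟩ : ∃ f : S →+* S', hS = f.toAlgebra := ⟨_, Algebra.algebra_ext _ _ fun _ ↦ rfl⟩
  obtain ⟨g, rfl⟩ : ∃ g : Q →+* S', hQ = g.toAlgebra := ⟨_, Algebra.algebra_ext _ _ fun _ ↦ rfl⟩
  refine ⟨S', Q, _, _, f, g, ⟨‹_›, ‹_›, ?_, ‹_›, hS'.1, ?_, hS'.2.1, hsurj, hgen⟩, hS', hfd, hpd⟩
  · exact isNoetherianRing_of_surjective Q S' g hsurj
  · exact Function.Surjective.isLocalHom g hsurj

section BaseChange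

variable {R S M : Type u} [CommRing R] [CommRing S] [Algebra R S] [AddCommGroup M] [Module R M]
  [Module S M] [IsScalarTower R S M]

theorem FlatDimFinite.of_isPushout {R' C Q : Type u} [CommRing R'] [CommRing C] [CommRing Q]
    [Algebra R R'] [Algebra R C] [Algebra R' C] [Algebra S C] [IsScalarTower R R' C]
    [IsScalarTower R S C] [Algebra.IsPushout R R' S C] [Algebra Q R'] [Algebra Q C]
    [IsScalarTower Q R' C] (h : FlatDimFinite Q (R' ⊗[R] M)) : FlatDimFinite Q (C ⊗[S] M) := by
  obtain ⟨d, hd⟩ := h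
  exact ⟨d, hd.of_linearEquiv
    ((Algebra.IsPushout.cancelBaseChange R R' S C M).symm.restrictScalars Q)⟩

theorem FlatDimFinite.localization {A C L L' : Type u} [CommRing A] [CommRing C]
    [CommRing L] [CommRing L'] [Algebra A C] [Algebra A L] [Algebra L L'] [Algebra C L']
    [Algebra A L'] [IsScalarTower A C L'] [IsScalarTower A L L'] [Algebra S C] [Algebra S L']
    [IsScalarTower S C L'] (W : Submonoid A) [IsLocalization W L]
    [IsLocalization (W.map (algebraMap A C)) L'] (h : FlatDimFinite A (C ⊗[S] M)) :
    FlatDimFinite L (L' ⊗[S] M) := by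
  obtain ⟨d, hd⟩ := h
  have := IsLocalization.flat L W
  have : IsLocalization (Algebra.algebraMapSubmonoid C W) L' := ‹_›
  have : Algebra.IsPushout A L C L' := (Algebra.isPushout_of_isLocalization W L C L').symm
  exact ⟨d, (hd.baseChange (Q' := L)).of_linearEquiv
    (Algebra.IsPushout.cancelBaseChange A L C L' (C ⊗[S] M)).symm |>.of_linearEquiv
    ((AlgebraTensorModule.cancelBaseChange S C L' L' M).restrictScalars L)⟩

end BaseChange

theorem isRegularlyGenerated_ker_localRingHom_map {A B : Type u} [CommRing A] [CommRing B]
    {g : A →+* B} (hg : Function.Surjective g) (hker : IsRegularlyGenerated (RingHom.ker g)) {n : ℕ}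
    (𝔮 : Ideal (MvPolynomial (Fin n) B)) [𝔮.IsPrime] :
    IsRegularlyGenerated (RingHom.ker
      (Localization.localRingHom (𝔮.comap (MvPolynomial.map g)) 𝔮 (MvPolynomial.map g) rfl)) := by
  rw [(IsEssentiallySurjective.of_surjective (MvPolynomial.map_surjective g hg)).ker_localRingHom,
    MvPolynomial.ker_map, ← MvPolynomial.algebraMap_eq]
  exact hker.map.map

section Deformation

attribute [local instance] Algebra.TensorProduct.rightAlgebra

variable {R S R' : Type u} (Q : Type u) {M : Type u} [CommRing R] [IsLocalRing R] [CommRing S]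
  [IsLocalRing S] [CommRing R'] [CommRing Q] [Algebra R S] [IsLocalHom (algebraMap R S)]
  [Algebra R R'] [Algebra Q R'] [AddCommGroup M] [Module R M] [Module S M] [IsScalarTower R S M]
  {n : ℕ} (x : Fin n → S)
  (𝔭 : Ideal (ClosedFibre R R' ⊗[ResidueField R] ResidueField S)) [𝔭.IsPrime]

/-- The preimage in `Q[X]` of a prime ideal of `(R' / m R') ⊗_k ℓ`. -/
noncomputable abbrev deformedPresentationPrime : Ideal (MvPolynomial (Fin n) Q) :=
  (fibrePresentationPrime x 𝔭).comap (MvPolynomial.map (algebraMap Q R'))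

/-- The composite of `fibrePresentation x 𝔭` with the localization of `Q[X] → R'[X]`. -/
noncomputable abbrev deformedPresentation :
    Localization.AtPrime (deformedPresentationPrime Q x 𝔭) →+* FibreLocalization R S R' 𝔭 :=
  Localization.localRingHom _ (𝔭.comap (fibreMap R S R'))
    ((aevalBaseChange R' x).comp (MvPolynomial.map (algebraMap Q R'))) rfl

variable {Q x}

theorem deformedPresentation_surjective
    (hx : IsEssentiallySurjective
      (MvPolynomial.aeval x : MvPolynomial (Fin n) R →ₐ[R] S).toRingHom)
    (hQ : Function.Surjective (algebraMap Q R')) :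
    Function.Surjective (deformedPresentation Q x 𝔭) :=
  ((hx.aevalBaseChange R').comp_surjective
    (MvPolynomial.map_surjective _ hQ)).localRingHom_surjective _

theorem isRegularlyGenerated_ker_deformedPresentation [IsNoetherianRing R'] [Module.Flat R R']
    (hx : IsEssentiallySurjective
      (MvPolynomial.aeval x : MvPolynomial (Fin n) R →ₐ[R] S).toRingHom)
    (hS : IsRegularlyGenerated (presentationKernel R x))
    (hQ : Function.Surjective (algebraMap Q R'))
    (hker : IsRegularlyGenerated (RingHom.ker (algebraMap Q R'))) :
    IsRegularlyGenerated (RingHom.ker (deformedPresentation Q x 𝔭)) := by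
  rw [deformedPresentation, Localization.localRingHom_comp _ (fibrePresentationPrime x 𝔭) _
    (MvPolynomial.map (algebraMap Q R')) rfl (aevalBaseChange R' x) rfl]
  exact .ker_comp
    ((IsEssentiallySurjective.of_surjective
      (MvPolynomial.map_surjective _ hQ)).localRingHom_surjective _)
    (isRegularlyGenerated_ker_localRingHom_map hQ hker _)
    ((isRegularlyGenerated_ker_fibrePresentation_iff 𝔭 hx).2 hS)

theorem FlatDimFinite.tensor_fibreLocalization
    (hx : IsEssentiallySurjective
      (MvPolynomial.aeval x : MvPolynomial (Fin n) R →ₐ[R] S).toRingHom)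
    (hQ : Function.Surjective (algebraMap Q R')) (hfd : FlatDimFinite Q (R' ⊗[R] M)) :
    letI := (deformedPresentation Q x 𝔭).toAlgebra
    FlatDimFinite (Localization.AtPrime (deformedPresentationPrime Q x 𝔭))
      (FibreLocalization R S R' 𝔭 ⊗[S] M) := by
  let φ : MvPolynomial (Fin n) Q →+* R' ⊗[R] S :=
    (aevalBaseChange R' x).comp (MvPolynomial.map (algebraMap Q R'))
  have hφ : IsEssentiallySurjective φ :=
    (hx.aevalBaseChange R').comp_surjective (MvPolynomial.map_surjective _ hQ)
  algebraize [φ, deformedPresentation Q x 𝔭]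
  have : IsLocalization ((deformedPresentationPrime Q x 𝔭).primeCompl.map φ)
      (FibreLocalization R S R' 𝔭) := hφ.isLocalization_map_primeCompl_comap
    (𝔭.comap (fibreMap R S R')) (FibreLocalization R S R' 𝔭)
  have : IsScalarTower Q (MvPolynomial (Fin n) Q) (R' ⊗[R] S) := .of_algebraMap_eq fun q ↦ by
    change _ = aevalBaseChange R' x (MvPolynomial.map (algebraMap Q R') (MvPolynomial.C q))
    rw [MvPolynomial.map_C]
    exact (RingHom.congr_fun (aevalBaseChange_comp_C R' x) (algebraMap Q R' q)).symm
  have : IsScalarTower (MvPolynomial (Fin n) Q)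
      (Localization.AtPrime (deformedPresentationPrime Q x 𝔭)) (FibreLocalization R S R' 𝔭) :=
    .of_algebraMap_eq fun p ↦ (Localization.localRingHom_to_map _ _ φ rfl p).symm
  have hQX : FlatDimFinite (MvPolynomial (Fin n) Q) ((R' ⊗[R] S) ⊗[S] M) :=
    hfd.of_isPushout.mvPolynomial
  exact hQX.localization (deformedPresentationPrime Q x 𝔭).primeCompl

variable [IsNoetherianRing Q] [Module.Flat R R']

theorem HasFiniteUpperCIDim.of_isRegularLocal_localization_fibre
    (h𝔭 : IsRegularLocal (Localization.AtPrime 𝔭))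
    (hx : IsEssentiallySurjective
      (MvPolynomial.aeval x : MvPolynomial (Fin n) R →ₐ[R] S).toRingHom)
    (hS : IsRegularlyGenerated (presentationKernel R x))
    (hQ : Function.Surjective (algebraMap Q R'))
    (hker : IsRegularlyGenerated (RingHom.ker (algebraMap Q R')))
    (hfd : FlatDimFinite Q (R' ⊗[R] M)) : HasFiniteUpperCIDim S M := by
  have := isNoetherianRing_of_surjective Q R' _ hQ
  have : IsNoetherianRing (Localization.AtPrime (deformedPresentationPrime Q x 𝔭)) :=
    IsLocalization.isNoetherianRing (deformedPresentationPrime Q x 𝔭).primeCompl _ inferInstance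
  algebraize [deformedPresentation Q x 𝔭]
  exact .of_algebra (isWeaklyRegularHom_fibreLocalization R S R' 𝔭 h𝔭)
    (deformedPresentation_surjective 𝔭 hx hQ)
    (isRegularlyGenerated_ker_deformedPresentation 𝔭 hx hS hQ hker)
    (hfd.tensor_fibreLocalization 𝔭 hx hQ)

end Deformation

theorem exists_isRegularLocal_localization {k ℓ B : Type u} [Field k] [Field ℓ] [CommRing B]
    [Algebra k ℓ] [Algebra k B] [Algebra.EssFiniteType k ℓ]
    (hsep : IsSeparableFieldExtension k ℓ) (hB : IsRegularLocal B) :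
    ∃ (𝔭 : Ideal (B ⊗[k] ℓ)) (_ : 𝔭.IsPrime), IsRegularLocal (Localization.AtPrime 𝔭) := by
  obtain ⟨_, _, -⟩ := id hB
  have : IsReduced (ResidueField B ⊗[k] ℓ) := hsep _ _ _
  have : IsNoetherianRing (B ⊗[k] ℓ) := Algebra.EssFiniteType.isNoetherianRing B _
  have hne : (maximalIdeal B).map (algebraMap B (B ⊗[k] ℓ)) ≠ ⊤ := fun htop ↦ by
    have hcomap := Ideal.comap_map_eq_self_of_faithfullyFlat (B := B ⊗[k] ℓ) (maximalIdeal B)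
    rw [htop, Ideal.comap_top] at hcomap
    exact (maximalIdeal.isMaximal B).ne_top hcomap.symm
  obtain ⟨𝔭, h𝔭⟩ := Ideal.nonempty_minimalPrimes hne
  have := h𝔭.1.1
  exact ⟨𝔭, this, isRegularLocal_localization_of_mem_minimalPrimes hB 𝔭 h𝔭⟩

theorem HasFiniteUpperCIDim.of_isRegularlyGenerated_presentationKernel {R S M : Type u}
    [CommRing R] [IsLocalRing R] [CommRing S] [IsLocalRing S] [Algebra R S]
    [IsLocalHom (algebraMap R S)] [Algebra.EssFiniteType R S] [AddCommGroup M] [Module R M]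
    [Module S M] [IsScalarTower R S M]
    (hsep : IsSeparableFieldExtension (ResidueField R) (ResidueField S)) {n : ℕ} {x : Fin n → S}
    (hx : IsEssentiallySurjective
      (MvPolynomial.aeval x : MvPolynomial (Fin n) R →ₐ[R] S).toRingHom)
    (hS : IsRegularlyGenerated (presentationKernel R x)) (hfd : HasFiniteUpperCIDim R M) :
    HasFiniteUpperCIDim S M := by
  obtain ⟨R', Q, _, _, f, g, ⟨_, _, _, _, -, -, _, hg, hker⟩, hf, hfd, -⟩ := hfd
  algebraize [f, g]
  obtain ⟨-, _, hfibre⟩ := isWeaklyRegularHom_algebraMap_iff.1 hf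
  have := essFiniteType_residueField R S
  obtain ⟨𝔭, _, h𝔭⟩ := exists_isRegularLocal_localization (B := ClosedFibre R R') hsep hfibre
  exact .of_isRegularLocal_localization_fibre 𝔭 h𝔭 hx hS hg
    (generatedByRegularSequence_iff.1 hker).1 (flatDimFinite_compHom_iff.1 hfd)

theorem ascent_upperCIfd_of_eft_ci_separable_general (R S M : Type u) [CommRing R] [CommRing S]
    [IsLocalRing R] [IsLocalRing S] [IsNoetherianRing S] [Algebra R S] [IsLocalHom (algebraMap R S)]
    [AddCommGroup M] [Module R M] [Module S M] [IsScalarTower R S M] [Algebra.EssFiniteType R S]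
    (hci : IsCIAt R S (algebraMap R S) (maximalIdeal S))
    (hsep : letI := (IsLocalRing.ResidueField.map (algebraMap R S)).toAlgebra;
      IsSeparableFieldExtension (ResidueField R) (ResidueField S))
    (hfd : HasFiniteUpperCIDim R M) :
    HasFiniteUpperCIDim S M := by
  rw [← algebra_residueField_eq_toAlgebra] at hsep
  obtain ⟨n, x, hx⟩ := IsEssentiallySurjective.exists_aeval R S
  exact hfd.of_isRegularlyGenerated_presentationKernel hsep hx
    (hci.isRegularlyGenerated_presentationKernel hsep hx)

variable (R S M : Type u) [CommRing R] [CommRing S]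
  [IsLocalRing R] [IsLocalRing S] [IsNoetherianRing R] [IsNoetherianRing S]
  [Algebra R S] [IsLocalHom (algebraMap R S)]
  [AddCommGroup M] [Module R M] [Module S M] [IsScalarTower R S M] [Module.Finite S M]

/-- Ascent of complete intersection flat dimension. -/
theorem ascent_upperCIfd_of_eft_ci_separable [Algebra.EssFiniteType R S]
    (hci : IsCIAt R S (algebraMap R S) (maximalIdeal S))
    (hsep : letI := (IsLocalRing.ResidueField.map (algebraMap R S)).toAlgebra;
      IsSeparableFieldExtension (ResidueField R) (ResidueField S))
    (hfd : HasFiniteUpperCIDim R M) :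
    HasFiniteUpperCIDim S M :=
  ascent_upperCIfd_of_eft_ci_separable_general R S M hci hsep hfd
end

section
/- Let φ: (R,m,k) → (S,n,ℓ) be a surjective local ring homomorphism between commutative Noetherian local rings whose kernel is generated by an R-regular sequence, and let R → (R',m',k') ← Q be a quasi-deformation. Set S' = S ⊗_R R', with induced maps δ': S → S' and γ': Q → S'. Then the diagram S → S' ← Q is a quasi-deformation, and the closed fibre of δ' is isomorphic to the closed fibre R'/mR' of R → R'. In particular, if R → R' ← Q is an upper quasi-deformation (respectively, a complete intersection quasi-deformation), then so is S → S' ← Q. -/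
/-!
Common definitions: André–Quillen homology via the standard (comonad/polynomial)
simplicial resolution, complete-intersection (flat) dimensions via quasi-deformations,
Cohen factorizations, Koszul homology `H₁`, and related notions.
-/

universe u

open TensorProduct IsLocalRing

/-! Tensoring `R → R'` with `S = R ⧸ I` replaces `R'` by `R' ⧸ I R'`. An `R`-regular sequence
generating `I` stays regular on the flat `R`-algebra `R'`, so lifting it to `Q` and appending it to
a sequence generating `ker (Q → R')` gives a regular sequence generating `ker (Q → R' ⧸ I R')`.

A Cohen factorization `R → A → R̂'` reduces modulo `I` to `S → A ⧸ I A → R̂' ⧸ I R̂'`, and the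
target is the completion of `R' ⧸ I R'`. If `y` generates `ker (A → R̂')` and `x` generates `I`,
both regular, then `y, x` is regular on `A` because `R̂'` is flat over `R`; in a Noetherian local
ring regular sequences may be permuted, so `x, y` is regular too, which makes the image of `y`
regular on `A ⧸ I A`. -/

open RingTheory.Sequence

section RegularSequences

variable {A B C : Type*} [CommRing A] [CommRing B] [CommRing C]

lemma isWeaklyRegular_append_iff_of_surjective {π : A →+* B} (hπ : Function.Surjective π)
    {ys : List A} (hys : Ideal.ofList ys = RingHom.ker π) (xs : List A) :
    IsWeaklyRegular A (ys ++ xs) ↔ IsWeaklyRegular A ys ∧ IsWeaklyRegular B (xs.map π) := by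
  algebraize [π]
  have hker : (Ideal.ofList ys • ⊤ : Ideal A) = LinearMap.ker (Algebra.linearMap A B) := by
    rw [smul_eq_mul, Ideal.mul_top, hys]
    rfl
  let e : (A ⧸ (Ideal.ofList ys • ⊤ : Ideal A)) ≃ₗ[A] B :=
    Submodule.quotEquivOfEq _ _ hker ≪≫ₗ
      LinearMap.quotKerEquivOfSurjective (Algebra.linearMap A B) hπ
  rw [isWeaklyRegular_append_iff, e.isWeaklyRegular_congr xs]
  exact and_congr_right' (isWeaklyRegular_map_algebraMap_iff B B xs).symm

end RegularSequences

namespace GeneratedByRegularSequence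

variable {A B C : Type u} [CommRing A] [CommRing B] [CommRing C]

lemma of_isWeaklyRegular {I : Ideal A} {rs : List A} (hrs : IsWeaklyRegular A rs)
    (hspan : Ideal.ofList rs = I) (hI : I ≠ ⊤) : GeneratedByRegularSequence A I :=
  ⟨rs, ⟨hrs, by rwa [smul_eq_mul, Ideal.mul_top, hspan, ne_comm]⟩, hspan⟩

lemma ne_top {I : Ideal A} (hI : GeneratedByRegularSequence A I) : I ≠ ⊤ := by
  obtain ⟨rs, hrs, rfl⟩ := hI
  simpa only [smul_eq_mul, Ideal.mul_top] using hrs.top_ne_smul.symm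

lemma comap_of_surjective {π : A →+* B} (hπ : Function.Surjective π)
    (hker : GeneratedByRegularSequence A (RingHom.ker π)) {J : Ideal B}
    (hJ : GeneratedByRegularSequence B J) : GeneratedByRegularSequence A (J.comap π) := by
  have hJ_top := Ideal.comap_ne_top π hJ.ne_top
  obtain ⟨ys, hys, hys_ker⟩ := hker
  obtain ⟨xs, hxs, rfl⟩ := hJ
  obtain ⟨zs, rfl⟩ := List.map_surjective_iff.mpr hπ xs
  refine of_isWeaklyRegular (rs := ys ++ zs) ?_ ?_ hJ_top
  · exact (isWeaklyRegular_append_iff_of_surjective hπ hys_ker zs).mpr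
      ⟨hys.toIsWeaklyRegular, hxs.toIsWeaklyRegular⟩
  · change _ = (Ideal.ofList (zs.map π)).comap π
    rw [← Ideal.map_ofList, Ideal.comap_map_of_surjective' π hπ, Ideal.ofList_append, sup_comm]
    exact congrArg _ hys_ker

lemma map_of_flat [Algebra A B] [Module.Flat A B] {I : Ideal A}
    (hI : GeneratedByRegularSequence A I) (hIB : I.map (algebraMap A B) ≠ ⊤) :
    GeneratedByRegularSequence B (I.map (algebraMap A B)) := by
  obtain ⟨rs, hrs, rfl⟩ := hI
  exact of_isWeaklyRegular hrs.toIsWeaklyRegular.of_flat (Ideal.map_ofList _ rs).symm hIB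

lemma map_ringEquiv (e : A ≃+* B) {I : Ideal A} (hI : GeneratedByRegularSequence A I) :
    GeneratedByRegularSequence B (I.map (e : A →+* B)) := by
  algebraize [(e : A →+* B)]
  have : Module.Flat A B := RingHom.Flat.of_bijective e.bijective
  refine hI.map_of_flat fun h => hI.ne_top ?_
  rw [← Ideal.comap_map_of_bijective (e : A →+* B) e.bijective (I := I)]
  exact (congrArg _ h).trans Ideal.comap_top

lemma map_ker_of_isWeaklyRegular [IsLocalRing A] [IsNoetherianRing A] [Nontrivial C]
    {g : A →+* B} (hg : Function.Surjective g)
    (hg_ker : GeneratedByRegularSequence A (RingHom.ker g))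
    {π : A →+* C} (hπ : Function.Surjective π) {xs : List A}
    (hxs : Ideal.ofList xs = RingHom.ker π) (hxs_reg : IsWeaklyRegular B (xs.map g)) :
    GeneratedByRegularSequence C ((RingHom.ker g).map π) := by
  have hker_le : RingHom.ker g ≤ maximalIdeal A := le_maximalIdeal hg_ker.ne_top
  obtain ⟨ys, hys, hys_ker⟩ := hg_ker
  change Ideal.ofList ys = _ at hys_ker
  have hmem : ∀ r ∈ ys ++ xs, r ∈ maximalIdeal A := by
    have hle : Ideal.ofList (ys ++ xs) ≤ maximalIdeal A := by
      rw [Ideal.ofList_append, hys_ker, hxs]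
      exact sup_le hker_le (le_maximalIdeal (RingHom.ker_ne_top π))
    exact fun r hr => hle (Ideal.subset_span hr)
  have hyx : IsWeaklyRegular A (ys ++ xs) :=
    (isWeaklyRegular_append_iff_of_surjective hg hys_ker xs).mpr ⟨hys.toIsWeaklyRegular, hxs_reg⟩
  have hxy : IsWeaklyRegular A (xs ++ ys) :=
    isWeaklyRegular_of_perm_of_subset_maximalIdeal hyx List.perm_append_comm hmem
  have hmap_le : (RingHom.ker g).map π ≤ (maximalIdeal A).map π := Ideal.map_mono hker_le
  have : IsLocalRing C := .of_surjective' π hπ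
  rw [map_maximalIdeal_of_surjective π hπ] at hmap_le
  refine of_isWeaklyRegular ((isWeaklyRegular_append_iff_of_surjective hπ hxs ys).mp hxy).2 ?_
    (hmap_le.trans_lt (maximalIdeal.isMaximal C).lt_top).ne
  rw [← Ideal.map_ofList, hys_ker]

end GeneratedByRegularSequence

lemma IsRegularLocal.of_ringEquiv_s14 {A B : Type u} [CommRing A] [CommRing B] (e : A ≃+* B)
    (hA : IsRegularLocal A) : IsRegularLocal B := by
  obtain ⟨_, _, hm⟩ := hA
  have : IsLocalRing B := e.isLocalRing
  refine ⟨isNoetherianRing_of_ringEquiv A e, this, ?_⟩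
  rw [← map_maximalIdeal_of_surjective (e : A →+* B) e.surjective]
  exact hm.map_ringEquiv e

section Quotients

variable {A B C D : Type*} [CommRing A] [CommRing B] [CommRing C] [CommRing D]

/-- The third isomorphism theorem `A ⧸ J ≃ B ⧸ J B` for a surjection `A → B` whose kernel lies
in `J`. -/
noncomputable def quotientEquivQuotientMapOfSurjective {f : A →+* B}
    (hf : Function.Surjective f) {J : Ideal A} (hJ : RingHom.ker f ≤ J) : A ⧸ J ≃+* B ⧸ J.map f :=
  RingEquiv.ofBijective (Ideal.quotientMap (J.map f) f Ideal.le_comap_map)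
    ⟨Ideal.quotientMap_injective' (by
      rw [Ideal.comap_map_of_surjective' f hf]
      exact sup_le le_rfl hJ), Ideal.quotientMap_surjective hf⟩

lemma ker_eq_map_ker_of_comp_eq {g : A →+* B} {π : A →+* C} {p : B →+* D} {G : C →+* D}
    (hG : G.comp π = p.comp g) (hg : Function.Surjective g) (hπ : Function.Surjective π)
    (hp : RingHom.ker p = (RingHom.ker π).map g) :
    RingHom.ker G = (RingHom.ker g).map π := by
  have hcomap : (RingHom.ker G).comap π = RingHom.ker π ⊔ RingHom.ker g := by
    rw [RingHom.comap_ker, hG, ← RingHom.comap_ker, hp, Ideal.comap_map_of_surjective' g hg]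
  rw [← Ideal.map_comap_of_surjective π hπ (RingHom.ker G), hcomap, Ideal.map_sup,
    (Ideal.map_eq_bot_iff_le_ker π).mpr le_rfl, bot_sup_eq]

end Quotients

section Completion

lemma isPrecomplete_of_surjective {A M N : Type*} [CommRing A] [AddCommGroup M] [Module A M]
    [AddCommGroup N] [Module A N] (I : Ideal A) [IsPrecomplete I M] {f : M →ₗ[A] N}
    (hf : Function.Surjective f) : IsPrecomplete I N := by
  rw [← AdicCompletion.of_surjective_iff]
  intro y
  obtain ⟨x, rfl⟩ := AdicCompletion.map_surjective I hf y
  obtain ⟨z, rfl⟩ := AdicCompletion.of_surjective I M x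
  exact ⟨f z, (AdicCompletion.map_of I f z).symm⟩

lemma isAdicComplete_maximalIdeal_of_surjective {A B : Type*} [CommRing A] [CommRing B]
    [IsLocalRing A] [IsLocalRing B] [IsNoetherianRing B] [IsPrecomplete (maximalIdeal A) A]
    {f : A →+* B} (hf : Function.Surjective f) : IsAdicComplete (maximalIdeal B) B := by
  algebraize [f]
  have : IsPrecomplete (maximalIdeal B) B := by
    rw [← map_maximalIdeal_of_surjective f hf]
    exact IsPrecomplete.map_algebraMap_iff.mpr
      (isPrecomplete_of_surjective _ (f := Algebra.linearMap A B) hf)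
  exact {}

variable {A B : Type*} [CommRing A] [CommRing B]

lemma pow_le_comap_pow {I : Ideal A} {J : Ideal B} {f : A →+* B} (hf : I ≤ J.comap f) (n : ℕ) :
    I ^ n ≤ (J ^ n).comap f :=
  (Ideal.pow_right_mono hf n).trans (Ideal.le_comap_pow f n)

lemma factorPow_comp_quotientMap_comp_evalₐ {I : Ideal A} {J : Ideal B} {f : A →+* B}
    (hf : I ≤ J.comap f) {m n : ℕ} (hmn : m ≤ n) :
    (Ideal.Quotient.factorPow J hmn).comp
        ((Ideal.quotientMap (J ^ n) f (pow_le_comap_pow hf n)).comp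
          (AdicCompletion.evalₐ I n : AdicCompletion I A →+* A ⧸ I ^ n)) =
      (Ideal.quotientMap (J ^ m) f (pow_le_comap_pow hf m)).comp
        (AdicCompletion.evalₐ I m : AdicCompletion I A →+* A ⧸ I ^ m) := by
  ext x
  obtain ⟨a, rfl⟩ := AdicCompletion.mk_surjective _ _ x
  simp only [RingHom.comp_apply, RingHom.coe_coe, AdicCompletion.evalₐ_mk, Ideal.quotientMap_mk]
  refine Ideal.Quotient.eq.mpr ?_
  rw [← map_sub f]
  exact pow_le_comap_pow hf m (Ideal.Quotient.eq.mp (AdicCompletion.Ideal.mk_eq_mk I hmn a))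

/-- The ring homomorphism between the `I`-adic completion of `A` and the `J`-adic completion of `B`
induced by `f : A → B` with `I ≤ f⁻¹ J`. Mathlib's `AdicCompletion.map` is restricted to linear
maps and a single ideal. -/
noncomputable def adicCompletionMap {I : Ideal A} {J : Ideal B} (f : A →+* B) (hf : I ≤ J.comap f) :
    AdicCompletion I A →+* AdicCompletion J B :=
  AdicCompletion.liftRingHom J _ (factorPow_comp_quotientMap_comp_evalₐ hf)

lemma evalₐ_adicCompletionMap {I : Ideal A} {J : Ideal B} (f : A →+* B) (hf : I ≤ J.comap f)
    (n : ℕ) (x : AdicCompletion I A) :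
    AdicCompletion.evalₐ J n (adicCompletionMap f hf x) =
      Ideal.quotientMap (J ^ n) f (pow_le_comap_pow hf n) (AdicCompletion.evalₐ I n x) :=
  AdicCompletion.evalₐ_liftRingHom J _ (factorPow_comp_quotientMap_comp_evalₐ hf) n x

lemma adicCompletionMap_comp_algebraMap {I : Ideal A} {J : Ideal B} (f : A →+* B)
    (hf : I ≤ J.comap f) :
    (adicCompletionMap f hf).comp (algebraMap A (AdicCompletion I A)) =
      (algebraMap B (AdicCompletion J B)).comp f := by
  refine RingHom.ext fun a => AdicCompletion.ext_evalₐ (I := J) fun n => ?_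
  rw [RingHom.comp_apply, RingHom.comp_apply, evalₐ_adicCompletionMap, AlgHom.commutes]
  simp

lemma mem_pow_smul_top_iff [Algebra A B] (I : Ideal A) (n : ℕ) (b : B) :
    b ∈ (I ^ n • ⊤ : Submodule A B) ↔ b ∈ I.map (algebraMap A B) ^ n := by
  rw [Ideal.smul_top_eq_map, Ideal.map_pow, Submodule.restrictScalars_mem]

lemma adicCompletionMap_surjective {I : Ideal A} {J : Ideal B} {f : A →+* B}
    (hf : Function.Surjective f) (hJ : I.map f = J) :
    Function.Surjective (adicCompletionMap f (Ideal.map_le_iff_le_comap.mp hJ.le)) := by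
  subst hJ
  algebraize [f]
  intro y
  obtain ⟨b, rfl⟩ := AdicCompletion.mk_surjective _ _ y
  have hb : ∀ {m n : ℕ}, m ≤ n → b m ≡ b n [SMOD (I ^ m • ⊤ : Submodule A B)] := fun hmn => by
    have h := SModEq.sub_mem.mp (b.2 hmn)
    rw [smul_eq_mul, Ideal.mul_top] at h
    exact SModEq.sub_mem.mpr ((mem_pow_smul_top_iff I _ _).mpr h)
  obtain ⟨x, hx⟩ := AdicCompletion.map_surjective I (f := Algebra.linearMap A B) hf
    (AdicCompletion.mk I B ⟨b, hb⟩)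
  obtain ⟨a, rfl⟩ := AdicCompletion.mk_surjective _ _ x
  refine ⟨AdicCompletion.mk I A a, AdicCompletion.ext_evalₐ (I := I.map f) fun n => ?_⟩
  rw [evalₐ_adicCompletionMap, AdicCompletion.evalₐ_mk, AdicCompletion.evalₐ_mk,
    Ideal.quotientMap_mk, Ideal.Quotient.eq]
  have hxn := congrArg (AdicCompletion.eval I B n) hx
  rw [AdicCompletion.map_mk] at hxn
  exact (mem_pow_smul_top_iff I n _).mp ((Submodule.Quotient.eq _).mp hxn)

lemma adicCompletion_map_subtype_mem (I : Ideal A) {K : Ideal A} (hK : K.FG)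
    (x : AdicCompletion I K) :
    AdicCompletion.map I K.subtype x ∈ K.map (algebraMap A (AdicCompletion I A)) := by
  have : Module.Finite A K := .of_fg hK
  obtain ⟨t, rfl⟩ := AdicCompletion.ofTensorProduct_surjective_of_finite I K x
  induction t with
  | zero => simp only [map_zero, zero_mem]
  | add t u ht hu => simpa only [map_add] using add_mem ht hu
  | tmul r k =>
    rw [AdicCompletion.ofTensorProduct_tmul, map_smul, AdicCompletion.map_of]
    exact Ideal.mul_mem_left _ r (Ideal.mem_map_of_mem _ k.2)

lemma mem_map_ker_of_adicCompletion_map_eq_zero {A N : Type u} [CommRing A] [IsNoetherianRing A]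
    [AddCommGroup N] [Module A N] {I : Ideal A} {f : A →ₗ[A] N} (hf : Function.Surjective f)
    {x : AdicCompletion I A} (hx : AdicCompletion.map I f x = 0) :
    x ∈ Ideal.map (algebraMap A (AdicCompletion I A)) (LinearMap.ker f) := by
  obtain ⟨z, rfl⟩ := (AdicCompletion.map_exact (LinearMap.ker f).injective_subtype
    f.exact_subtype_ker_map hf x).mp hx
  exact adicCompletion_map_subtype_mem I (Ideal.fg_of_isNoetherianRing _) z

lemma ker_adicCompletionMap {A B : Type u} [CommRing A] [CommRing B] [IsNoetherianRing A]
    {I : Ideal A} {J : Ideal B} {f : A →+* B} (hf : Function.Surjective f) (hJ : I.map f = J) :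
    RingHom.ker (adicCompletionMap f (Ideal.map_le_iff_le_comap.mp hJ.le)) =
      (RingHom.ker f).map (algebraMap A (AdicCompletion I A)) := by
  subst hJ
  apply le_antisymm
  · algebraize [f]
    intro x hx
    obtain ⟨a, rfl⟩ := AdicCompletion.mk_surjective _ _ x
    have hmap : AdicCompletion.map I (Algebra.linearMap A B) (AdicCompletion.mk I A a) = 0 := by
      ext n
      have hn := congrArg (AdicCompletion.evalₐ (I.map f) n) hx
      rw [evalₐ_adicCompletionMap, AdicCompletion.evalₐ_mk, Ideal.quotientMap_mk, map_zero,
        Ideal.Quotient.eq_zero_iff_mem] at hn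
      exact (Submodule.Quotient.mk_eq_zero _).mpr ((mem_pow_smul_top_iff I n _).mpr hn)
    exact mem_map_ker_of_adicCompletion_map_eq_zero (f := Algebra.linearMap A B) hf hmap
  · rw [Ideal.map_le_iff_le_comap, RingHom.comap_ker, adicCompletionMap_comp_algebraMap]
    exact fun a ha => by rw [RingHom.mem_ker, RingHom.comp_apply, RingHom.mem_ker.mp ha, map_zero]

end Completion

section BaseChange

variable (R S B : Type u) [CommRing R] [CommRing S] [CommRing B] [Algebra R S] [Algebra R B]

/-- The map `b ↦ 1 ⊗ₜ b`, as a plain ring homomorphism so that it can be composed with maps that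
are not `R`-linear; it presents `S ⊗[R] B` as a quotient of `B` when `R → S` is surjective. -/
abbrev includeRightHom : B →+* S ⊗[R] B :=
  (Algebra.TensorProduct.includeRight : B →ₐ[R] S ⊗[R] B).toRingHom

lemma includeRightHom_comp_algebraMap :
    (includeRightHom R S B).comp (algebraMap R B) =
      (algebraMap S (S ⊗[R] B)).comp (algebraMap R S) := by
  rw [← IsScalarTower.algebraMap_eq R S (S ⊗[R] B)]
  exact (Algebra.TensorProduct.includeRight : B →ₐ[R] S ⊗[R] B).comp_algebraMap

variable {R S}

lemma includeRightHom_surjective (hsur : Function.Surjective (algebraMap R S)) :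
    Function.Surjective (includeRightHom R S B) :=
  Algebra.TensorProduct.includeRight_surjective _ hsur

lemma ker_includeRightHom (hsur : Function.Surjective (algebraMap R S)) :
    RingHom.ker (includeRightHom R S B) =
      (RingHom.ker (algebraMap R S)).map (algebraMap R B) := by
  let e : R ⊗[R] B ≃ₐ[R] B := Algebra.TensorProduct.lid R B
  let ρ : R ⊗[R] B →ₐ[R] S ⊗[R] B := Algebra.TensorProduct.map (Algebra.ofId R S) (AlgHom.id R B)
  have hcomp : includeRightHom R S B = (ρ : R ⊗[R] B →+* S ⊗[R] B).comp (e.symm : B →+* R ⊗[R] B) :=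
    RingHom.ext fun b => by simp [ρ, e]
  have hlid : (e : R ⊗[R] B →+* B).comp
      (Algebra.TensorProduct.includeLeft : R →ₐ[R] R ⊗[R] B).toRingHom = algebraMap R B :=
    RingHom.ext fun r => by simp [e, Algebra.algebraMap_eq_smul_one]
  rw [hcomp, ← RingHom.comap_ker]
  calc (RingHom.ker ρ).comap (e.symm : B →+* R ⊗[R] B)
      = (RingHom.ker ρ).map (e : R ⊗[R] B →+* B) := Ideal.comap_symm e.toRingEquiv
    _ = ((RingHom.ker (algebraMap R S)).map
          (Algebra.TensorProduct.includeLeft : R →ₐ[R] R ⊗[R] B).toRingHom).map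
            (e : R ⊗[R] B →+* B) := by
        rw [Algebra.TensorProduct.rTensor_ker _ hsur]
        rfl
    _ = (RingHom.ker (algebraMap R S)).map (algebraMap R B) := by rw [Ideal.map_map, hlid]

lemma isNoetherianRing_tensorProduct_of_surjective [IsNoetherianRing B]
    (hsur : Function.Surjective (algebraMap R S)) : IsNoetherianRing (S ⊗[R] B) :=
  isNoetherianRing_of_surjective _ _ _ (includeRightHom_surjective B hsur)

section Local

variable [IsLocalRing R]

lemma ker_includeRightHom_le [Nontrivial S] (hsur : Function.Surjective (algebraMap R S)) :
    RingHom.ker (includeRightHom R S B) ≤ (maximalIdeal R).map (algebraMap R B) := by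
  rw [ker_includeRightHom B hsur]
  exact Ideal.map_mono (le_maximalIdeal (RingHom.ker_ne_top _))

lemma isLocalRing_tensorProduct_of_surjective [Nontrivial S] [IsLocalRing B]
    [IsLocalHom (algebraMap R B)] (hsur : Function.Surjective (algebraMap R S)) :
    IsLocalRing (S ⊗[R] B) := by
  have hker : RingHom.ker (includeRightHom R S B) ≠ ⊤ :=
    ((ker_includeRightHom_le B hsur).trans_lt (map_maximalIdeal_lt_top _)).ne
  have : Nontrivial (S ⊗[R] B) := nontrivial_of_ne 0 1 fun h =>
    hker ((Ideal.eq_top_iff_one _).mpr (by rw [RingHom.mem_ker, map_one, h]))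
  exact .of_surjective' _ (includeRightHom_surjective B hsur)

variable [IsLocalRing S]

lemma map_maximalIdeal_algebraMap_tensorProduct (hsur : Function.Surjective (algebraMap R S)) :
    (maximalIdeal S).map (algebraMap S (S ⊗[R] B)) =
      ((maximalIdeal R).map (algebraMap R B)).map (includeRightHom R S B) := by
  rw [Ideal.map_map, includeRightHom_comp_algebraMap, ← Ideal.map_map,
    map_maximalIdeal_of_surjective _ hsur]

lemma isLocalHom_algebraMap_tensorProduct [IsLocalRing B] [IsLocalHom (algebraMap R B)]
    (hsur : Function.Surjective (algebraMap R S)) : IsLocalHom (algebraMap S (S ⊗[R] B)) := by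
  have := isLocalRing_tensorProduct_of_surjective B hsur
  refine ((local_hom_TFAE (algebraMap S (S ⊗[R] B))).out 0 2).mpr ?_
  rw [map_maximalIdeal_algebraMap_tensorProduct B hsur,
    ← map_maximalIdeal_of_surjective _ (includeRightHom_surjective B hsur)]
  exact Ideal.map_mono (((local_hom_TFAE (algebraMap R B)).out 0 2).mp ‹_›)

/-- The closed fibre of `S → S ⊗[R] B` is that of `R → B` when `R → S` is surjective. -/
noncomputable def closedFibreEquiv (hsur : Function.Surjective (algebraMap R S)) :
    (B ⧸ (maximalIdeal R).map (algebraMap R B)) ≃+*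
      (S ⊗[R] B) ⧸ (maximalIdeal S).map (algebraMap S (S ⊗[R] B)) :=
  (quotientEquivQuotientMapOfSurjective (includeRightHom_surjective B hsur)
    (ker_includeRightHom_le B hsur)).trans
      (Ideal.quotEquivOfEq (map_maximalIdeal_algebraMap_tensorProduct B hsur).symm)

variable {B}

lemma IsWeaklyRegularHom.baseChange [IsLocalRing B] (hsur : Function.Surjective (algebraMap R S))
    (h : IsWeaklyRegularHom R B (algebraMap R B)) :
    IsWeaklyRegularHom S (S ⊗[R] B) (algebraMap S (S ⊗[R] B)) := by
  obtain ⟨hlocal, hflat, hfibre⟩ := h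
  have : Module.Flat R B := RingHom.flat_algebraMap_iff.mp hflat
  exact ⟨isLocalHom_algebraMap_tensorProduct B hsur, RingHom.flat_algebraMap_iff.mpr inferInstance,
    hfibre.of_ringEquiv_s14 (closedFibreEquiv B hsur)⟩

variable {A R' : Type u} [CommRing A] [Algebra R A] [CommRing R'] [IsLocalRing R'] [Algebra R R']
  [IsLocalRing (S ⊗[R] R')]

lemma IsCohenFactorizationAt.baseChange [IsNoetherianRing R']
    (hsur : Function.Surjective (algebraMap R S)) {g : A →+* AdicCompletion (maximalIdeal R') R'}
    (hg : IsCohenFactorizationAt R R' (algebraMap R R') (maximalIdeal R') A (algebraMap R A) g) :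
    ∃ G : S ⊗[R] A →+* AdicCompletion (maximalIdeal (S ⊗[R] R')) (S ⊗[R] R'),
      IsCohenFactorizationAt S (S ⊗[R] R') (algebraMap S (S ⊗[R] R')) (maximalIdeal (S ⊗[R] R'))
        (S ⊗[R] A) (algebraMap S (S ⊗[R] A)) G ∧
      RingHom.ker G = (RingHom.ker g).map (includeRightHom R S A) := by
  obtain ⟨hcomm, hnoeth, ⟨hlocal, hcomplete⟩, hreg, hgsur, -⟩ := hg
  have := hreg.1
  have hnoethA := isNoetherianRing_tensorProduct_of_surjective A hsur
  have := isNoetherianRing_tensorProduct_of_surjective R' hsur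
  have := isLocalRing_tensorProduct_of_surjective A hsur
  have hA := includeRightHom_surjective A hsur
  have hR' := includeRightHom_surjective R' hsur
  have hmax := map_maximalIdeal_of_surjective _ hR'
  let p := adicCompletionMap (includeRightHom R S R') (Ideal.map_le_iff_le_comap.mp hmax.le)
  have hp : Function.Surjective p := adicCompletionMap_surjective hR' hmax
  have hp_ker : RingHom.ker p = (RingHom.ker (includeRightHom R S A)).map g := by
    rw [ker_adicCompletionMap hR' hmax, ker_includeRightHom R' hsur, ker_includeRightHom A hsur,
      Ideal.map_map, Ideal.map_map, hcomm]
  have hker_le : RingHom.ker (includeRightHom R S A) ≤ RingHom.ker (p.comp g) := by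
    rw [← RingHom.comap_ker, ← Ideal.map_le_iff_le_comap, hp_ker]
  let G := (includeRightHom R S A).liftOfSurjective hA ⟨p.comp g, hker_le⟩
  have hG : G.comp (includeRightHom R S A) = p.comp g := RingHom.liftOfRightInverse_comp _ _ _ _
  have hGsur : Function.Surjective G :=
    .of_comp (g := includeRightHom R S A) (by rw [← RingHom.coe_comp, hG]; exact hp.comp hgsur)
  have hGcomm : G.comp (algebraMap S (S ⊗[R] A)) =
      (algebraMap (S ⊗[R] R') _).comp (algebraMap S (S ⊗[R] R')) := by
    rw [← RingHom.cancel_right hsur, RingHom.comp_assoc, ← includeRightHom_comp_algebraMap,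
      ← RingHom.comp_assoc, hG, RingHom.comp_assoc, hcomm, ← RingHom.comp_assoc,
      adicCompletionMap_comp_algebraMap, RingHom.comp_assoc, RingHom.comp_assoc,
      includeRightHom_comp_algebraMap]
  exact ⟨G, ⟨hGcomm, hnoethA, ⟨‹_›, isAdicComplete_maximalIdeal_of_surjective hA⟩,
    hreg.baseChange hsur, hGsur, hGsur.isLocalHom⟩, ker_eq_map_ker_of_comp_eq hG hgsur hA hp_ker⟩

lemma IsCIAt.baseChange [IsNoetherianRing R'] [Module.Flat R R']
    (hsur : Function.Surjective (algebraMap R S))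
    (hker : GeneratedByRegularSequence R (RingHom.ker (algebraMap R S)))
    (h : IsCIAt R R' (algebraMap R R') (maximalIdeal R')) :
    IsCIAt S (S ⊗[R] R') (algebraMap S (S ⊗[R] R')) (maximalIdeal (S ⊗[R] R')) := by
  obtain ⟨A, _, f, g, hg, hgen⟩ := h
  let _ : Algebra R A := f.toAlgebra
  obtain ⟨G, hG, hG_ker⟩ := IsCohenFactorizationAt.baseChange (A := A) hsur hg
  refine ⟨S ⊗[R] A, inferInstance, algebraMap S (S ⊗[R] A), G, hG, ?_⟩
  obtain ⟨hcomm, _, ⟨_, -⟩, ⟨_, -⟩, hgsur, -⟩ := hg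
  obtain ⟨xs, hxs, hxs_ker⟩ := hker
  have hspan : Ideal.ofList (xs.map (algebraMap R A)) = RingHom.ker (includeRightHom R S A) := by
    rw [ker_includeRightHom A hsur, ← hxs_ker, ← Ideal.map_ofList]
  have : Module.Flat R (AdicCompletion (maximalIdeal R') R') := .trans R R' _
  have hcomp : g.comp (algebraMap R A) = algebraMap R (AdicCompletion (maximalIdeal R') R') :=
    hcomm.trans (IsScalarTower.algebraMap_eq R R' _).symm
  have hregular : IsWeaklyRegular (AdicCompletion (maximalIdeal R') R')
      ((xs.map (algebraMap R A)).map g) := by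
    rw [List.map_map, ← RingHom.coe_comp, hcomp]
    exact hxs.toIsWeaklyRegular.of_flat
  have := isLocalRing_tensorProduct_of_surjective A hsur
  rw [hG_ker]
  exact hgen.map_ker_of_isWeaklyRegular hgsur (includeRightHom_surjective A hsur) hspan hregular

end Local

end BaseChange

/-- Base change of a quasi-deformation along a surjective c.i. local homomorphism
(Proposition: the diagram `S → S ⊗_R R' ← Q` is a quasi-deformation whose flat
part has the same closed fibre as `R → R'`; upper and complete-intersection
quasi-deformations are preserved). -/
theorem quasiDeformation_baseChange
    (R S R' Q : Type u) [CommRing R] [CommRing S] [CommRing R'] [CommRing Q]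
    [IsLocalRing R] [IsLocalRing S] [IsLocalRing R'] [IsLocalRing Q]
    [IsNoetherianRing R] [IsNoetherianRing S] [IsNoetherianRing R'] [IsNoetherianRing Q]
    [Algebra R S] [IsLocalHom (algebraMap R S)]
    (hsur : Function.Surjective (algebraMap R S))
    (hker : GeneratedByRegularSequence R (RingHom.ker (algebraMap R S)))
    [Algebra R R'] [IsLocalHom (algebraMap R R')] [Module.Flat R R']
    (g : Q →+* R') (hgl : IsLocalHom g) (hgsur : Function.Surjective g)
    (hgker : GeneratedByRegularSequence Q (RingHom.ker g)) :
    ∃ hS' : IsLocalRing (S ⊗[R] R'),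
      IsQuasiDeformation S (S ⊗[R] R') Q (algebraMap S (S ⊗[R] R'))
        ((Algebra.TensorProduct.includeRight : R' →ₐ[R] S ⊗[R] R').toRingHom.comp g) ∧
      Nonempty
        (((S ⊗[R] R') ⧸ Ideal.map (algebraMap S (S ⊗[R] R')) (maximalIdeal S)) ≃+*
          (R' ⧸ Ideal.map (algebraMap R R') (maximalIdeal R))) ∧
      (IsWeaklyRegularHom R R' (algebraMap R R') →
        IsWeaklyRegularHom S (S ⊗[R] R') (algebraMap S (S ⊗[R] R'))) ∧
      (IsCIAt R R' (algebraMap R R') (maximalIdeal R') →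
        IsCIAt S (S ⊗[R] R') (algebraMap S (S ⊗[R] R'))
          (@IsLocalRing.maximalIdeal (S ⊗[R] R') _ hS')) := by
  have hS' := isLocalRing_tensorProduct_of_surjective R' hsur
  have hnoeth := isNoetherianRing_tensorProduct_of_surjective R' hsur
  have hlocal := isLocalHom_algebraMap_tensorProduct R' hsur
  have hcomp : Function.Surjective ((includeRightHom R S R').comp g) :=
    (includeRightHom_surjective R' hsur).comp hgsur
  have hkerInc : GeneratedByRegularSequence R' (RingHom.ker (includeRightHom R S R')) := by
    have hne := RingHom.ker_ne_top (includeRightHom R S R')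
    rw [ker_includeRightHom R' hsur] at hne ⊢
    exact hker.map_of_flat hne
  have hkerComp : GeneratedByRegularSequence Q (RingHom.ker ((includeRightHom R S R').comp g)) :=
    RingHom.comap_ker (includeRightHom R S R') g ▸ hgker.comap_of_surjective hgsur hkerInc
  exact ⟨hS', ⟨hS', inferInstance, hnoeth, inferInstance, hlocal, hcomp.isLocalHom,
    RingHom.flat_algebraMap_iff.mpr inferInstance, hcomp, hkerComp⟩,
    ⟨(closedFibreEquiv R' hsur).symm⟩, fun h => h.baseChange hsur, fun h => h.baseChange hsur hker⟩
end
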